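/- There exist absolute constants C > 0 such that the following holds. Let p be an odd prime, let g, h : 𝔽_p* → 𝔽_p* be arbitrary functions, define f(x,y) = g(x)(h(x)+y) on 𝔽_p* × 𝔽_p*, and set m = μ(g). Then for all nonempty finite subsets A, B, C ⊆ 𝔽_p* with |A| ≤ |B| and |A|, |B|, |C| ≤ p^{3/5}, the fourth-order difference energy satisfies E₄(B,C) = Σ_x r_{B−C}(x)⁴ ≤ C · m⁴ · min{ |f(A,B)|³|C|²/|A| , |f(A,B)|²|C|³/|A| } · log(2|A|). -/

import Mathlib

open Finset Pointwise

/-- `mu g` is `max_{t ∈ 𝔽_p*} |{x ∈ 𝔽_p* : g x = t}|`. -/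
def mu {p : ℕ} [NeZero p] (g : ZMod p → ZMod p) : ℕ :=
  Finset.sup (Finset.univ.filter fun t : ZMod p => t ≠ 0)
    (fun t => (Finset.univ.filter fun x : ZMod p => x ≠ 0 ∧ g x = t).card)

/-- `rSub B C x` is the number of ways to write `x = b - c` with `b ∈ B`, `c ∈ C`. -/
def rSub {p : ℕ} (B C : Finset (ZMod p)) (x : ZMod p) : ℕ :=
  ((B ×ˢ C).filter fun bc => bc.1 - bc.2 = x).card

/-- Fourth-order difference energy `E₄(B,C) = Σ_x r_{B-C}(x)^4`. -/
def E4 {p : ℕ} [NeZero p] (B C : Finset (ZMod p)) : ℕ :=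
  ∑ x : ZMod p, (rSub B C x) ^ 4

/-!
After passing to a subset of `A` on which `g` is injective, at the cost of a factor `m`, the maps
`z ↦ g a * (h a + x + z)` with `a ∈ A` and `r_{B-C}(x) ≥ t` are distinct affine maps, and each of
them has values in `f(A, B)` at `t` or more points of `C`. So it is enough to bound the number of
affine maps that are `t`-rich for a pair of sets; a dyadic summation over `t` then gives the energy,
and the two terms of the minimum come from exchanging the roles of `C` and `f(A, B)`.

By Cauchy–Schwarz, many rich maps produce many solutions of `l₁(x₁) = l₂(x₂)`. Such a solution is
an incidence between a line of 3-space attached to `(x₁, l₂)` and one attached to `(x₂, l₁)`.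
Over a transcendental extension a generic projective change of coordinates brings these lines into
general position, and the polynomial method of Guth and Katz bounds the incidences between two
families of at most `n²` lines by a multiple of `n³`: the lines concentrate on a surface of degree
much smaller than `n`, and an irreducible component with many of them divides its own flecnode
polynomials, hence is a quadric. The derivatives behave as in characteristic zero as long as the
degrees are below `p`, and the assumption that the sets have at most `p^{3/5}` elements guarantees
`n ≤ p` whenever counting pairs does not already suffice.
-/

section MultivariatePolynomials

open MvPolynomial

variable {σ R S : Type*} [CommRing R] [CommRing S] [Algebra R S]

lemma derivation_aeval [Fintype σ] (D : Derivation R S S) (f : σ → S) (P : MvPolynomial σ R) :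
    D (aeval f P) = ∑ k, aeval f (pderiv k P) * D (f k) := by
  classical
  induction P using MvPolynomial.induction_on with
  | C a => simp
  | add p q hp hq => simp only [map_add, hp, hq, add_mul, sum_add_distrib]
  | mul_X p k hp =>
    have hX : ∑ l, aeval f (p * pderiv l (X k)) * D (f l) = aeval f p * D (f k) := by
      rw [sum_eq_single_of_mem k (mem_univ k) fun l _ hl => by
        rw [pderiv_X_of_ne hl.symm, mul_zero, map_zero, zero_mul], pderiv_X_self, mul_one]
    simp only [pderiv_mul, map_add, add_mul, sum_add_distrib, hX]
    rw [map_mul, aeval_X, D.leibniz, smul_eq_mul, smul_eq_mul, hp, mul_sum, add_comm]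
    exact congrArg (· + _) (sum_congr rfl fun l _ => by rw [map_mul, aeval_X]; ring)

lemma pderiv_pderiv_comm (i j : σ) (P : MvPolynomial σ R) :
    pderiv i (pderiv j P) = pderiv j (pderiv i P) := by
  classical
  have hbracket : ⁅pderiv (R := R) i, pderiv j⁆ = 0 := derivation_ext fun k => by
    rw [Derivation.commutator_apply]
    simp only [pderiv_X, Pi.single_apply, apply_ite (pderiv _), pderiv_one, map_zero, ite_self,
      sub_zero, Derivation.coe_zero, Pi.zero_apply]
  have := congrArg (· P) hbracket
  rwa [Derivation.commutator_apply, Derivation.coe_zero, Pi.zero_apply, sub_eq_zero] at this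

lemma totalDegree_pderiv_le (i : σ) (P : MvPolynomial σ R) :
    (pderiv i P).totalDegree ≤ P.totalDegree - 1 := by
  classical
  refine Finset.sup_le fun m hm => ?_
  rw [mem_support_iff, coeff_pderiv] at hm
  have hle := le_totalDegree (mem_support_iff.2 (left_ne_zero_of_mul hm))
  rw [Finsupp.sum_add_index' (fun _ => rfl) (fun _ _ _ => rfl), Finsupp.sum_single_index rfl]
    at hle
  omega

lemma pderiv_ne_zero {i : σ} {P : MvPolynomial σ R} [IsDomain R] (hi : P.degreeOf i ≠ 0)
    (hchar : ∀ k : ℕ, 0 < k → k ≤ P.degreeOf i → (k : R) ≠ 0) : pderiv i P ≠ 0 := by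
  classical
  have hsupport : P.support.Nonempty := by
    rw [support_nonempty]
    rintro rfl
    exact hi (degreeOf_zero i)
  obtain ⟨m, hm, hmi⟩ := exists_mem_eq_sup P.support hsupport (fun m => m i)
  rw [← degreeOf_eq_sup] at hmi
  have hle : Finsupp.single i 1 ≤ m := Finsupp.single_le_iff.2 (by omega)
  intro h
  have hcoeff := congrArg (coeff (m - Finsupp.single i 1)) h
  rw [coeff_pderiv, tsub_add_cancel_of_le hle, coeff_zero] at hcoeff
  refine mul_ne_zero (mem_support_iff.1 hm) (hchar (m i) (by omega) hmi.ge) ?_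
  convert hcoeff using 2
  rw [Finsupp.tsub_apply, Finsupp.single_eq_same, ← Nat.cast_add_one, Nat.sub_add_cancel]
  omega

lemma degreeOf_aeval_le {τ : Type*} {i : σ} {f : τ → MvPolynomial σ R}
    (hf : ∀ k, (f k).degreeOf i ≤ 1) (P : MvPolynomial τ R) :
    (aeval f P).degreeOf i ≤ P.totalDegree := by
  rw [aeval_def, eval₂_eq]
  refine (degreeOf_sum_le i _ _).trans (Finset.sup_le fun m hm => ?_)
  rw [algebraMap_eq]
  calc (C (coeff m P) * ∏ k ∈ m.support, f k ^ m k).degreeOf i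
      ≤ (∏ k ∈ m.support, f k ^ m k).degreeOf i := degreeOf_C_mul_le _ i _
    _ ≤ ∑ k ∈ m.support, (f k ^ m k).degreeOf i := degreeOf_prod_le i _ _
    _ ≤ ∑ k ∈ m.support, m k := sum_le_sum fun k _ =>
        (degreeOf_pow_le i _ _).trans (by simpa using Nat.mul_le_mul_left (m k) (hf k))
    _ ≤ P.totalDegree := le_totalDegree hm

lemma X_sub_dvd_sub_aeval_update [DecidableEq σ] (k : σ) (φ P : MvPolynomial σ R) :
    X k - φ ∣ P - aeval (Function.update X k φ) P := by
  induction P using MvPolynomial.induction_on with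
  | C a => simp
  | add p q hp hq =>
    rw [map_add, add_sub_add_comm]
    exact dvd_add hp hq
  | mul_X p l hp =>
    have hX : X k - φ ∣ X l - Function.update X k φ l := by
      rcases eq_or_ne l k with rfl | hl
      · rw [Function.update_self]
      · rw [Function.update_of_ne hl, sub_self]
        exact dvd_zero _
    rw [map_mul, aeval_X]
    exact dvd_mul_sub_mul hp hX

lemma aeval_eq_of_degreeOf_eq_zero {i : σ} {P : MvPolynomial σ R} (hi : P.degreeOf i = 0)
    {f f' : σ → S} (hf : ∀ k ≠ i, f k = f' k) : aeval f P = aeval f' P := by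
  refine eval₂Hom_congr' rfl (fun k hk _ => hf k ?_) rfl
  rintro rfl
  classical
  rw [degreeOf_def, Multiset.count_eq_zero] at hi
  exact hi (Multiset.mem_toFinset.1 hk)

lemma card_le_totalDegree_of_X_sub_C_dvd {F : Type*} [Field F] {j : σ} {P : MvPolynomial σ F}
    (hP : P ≠ 0) {s : Finset F} (hs : ∀ α ∈ s, X j - C α ∣ P) : #s ≤ P.totalDegree := by
  classical
  have hcoprime : (s : Set F).Pairwise (Function.onFun IsCoprime fun α => X j - C α) := by
    intro α _ β _ hαβ
    refine ⟨C (β - α)⁻¹, -C (β - α)⁻¹, ?_⟩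
    rw [neg_mul, ← sub_eq_add_neg, ← mul_sub, sub_sub_sub_cancel_left, ← C_sub, ← C_mul,
      inv_mul_cancel₀ (sub_ne_zero.2 hαβ.symm), C_1]
  have hdegree (α : F) : 1 ≤ (X j - C α : MvPolynomial σ F).degreeOf j := by
    have hmem : Finsupp.single j 1 ∈ (X j - C α : MvPolynomial σ F).support := by
      rw [mem_support_iff, coeff_sub, coeff_X_same, coeff_C,
        if_neg (Finsupp.single_ne_zero.2 (one_ne_zero (α := ℕ))).symm, sub_zero]
      exact one_ne_zero (α := F)
    simpa using monomial_le_degreeOf j hmem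
  have hfactor (α : F) : (X j - C α : MvPolynomial σ F) ≠ 0 := by
    intro h
    have := hdegree α
    rw [h, degreeOf_zero] at this
    omega
  obtain ⟨Q, rfl⟩ := prod_dvd_of_coprime hcoprime hs
  calc #s ≤ ∑ α ∈ s, (X j - C α).degreeOf j := by
        simpa using card_nsmul_le_sum s _ 1 fun α _ => hdegree α
    _ = (∏ α ∈ s, (X j - C α)).degreeOf j := (degreeOf_prod_eq s _ fun α _ => hfactor α).symm
    _ ≤ _ := by
        rw [totalDegree_mul_of_isDomain (left_ne_zero_of_mul hP) (right_ne_zero_of_mul hP)]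
        exact (degreeOf_le_totalDegree _ j).trans (Nat.le_add_right _ _)

lemma coeff_mul_eq_zero {p q : MvPolynomial σ R} {l : σ →₀ ℕ} (h : ∀ r ≤ l, coeff r p = 0) :
    coeff l (q * p) = 0 := by
  classical
  rw [coeff_mul]
  refine sum_eq_zero fun x hx => ?_
  rw [h x.2 (le_of_add_le_right (mem_antidiagonal.1 hx).le), mul_zero]

lemma coeff_mul_eq_coeff_zero_mul {p q : MvPolynomial σ R} {l : σ →₀ ℕ}
    (h : ∀ r < l, coeff r p = 0) : coeff l (q * p) = coeff 0 q * coeff l p := by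
  classical
  rw [coeff_mul]
  refine sum_eq_single_of_mem (0, l) (mem_antidiagonal.2 (zero_add l)) fun x hx hne => ?_
  have hsum := mem_antidiagonal.1 hx
  have hx2 : x.2 ≠ l := by
    intro h2
    rw [h2, add_eq_right] at hsum
    exact hne (Prod.ext hsum h2)
  rw [h x.2 ((le_of_add_le_right hsum.le).lt_of_ne hx2), mul_zero]

/-- The equation in the direction `i` with `2 ≤ m i` expresses the coefficient of `p` at `m` through
coefficients at smaller multi-indices. -/
lemma coeff_eq_zero_of_second_order [IsDomain R] {p u a b : MvPolynomial σ R} {i : σ} {m : σ →₀ ℕ}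
    (hchar : ∀ k : ℕ, 0 < k → k ≤ p.degreeOf i → (k : R) ≠ 0) (hu : coeff 0 u ≠ 0)
    (hode : u * pderiv i (pderiv i p) = a * p + b * pderiv i p) (hm : 2 ≤ m i)
    (hlower : ∀ r < m, coeff r p = 0) : coeff m p = 0 := by
  classical
  obtain ⟨l, rfl⟩ : ∃ l, m = l + Finsupp.single i 2 :=
    ⟨m - Finsupp.single i 2, (tsub_add_cancel_of_le (Finsupp.single_le_iff.2 hm)).symm⟩
  have hsingle : Finsupp.single i 1 < Finsupp.single i 2 :=
    (Finsupp.single_le_single.2 one_le_two).lt_of_ne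
      fun h => absurd (Finsupp.single_injective i h) (by norm_num)
  have hsecond (r : σ →₀ ℕ) : coeff r (pderiv i (pderiv i p)) =
      coeff (r + Finsupp.single i 2) p * ((r i + 2 : ℕ) * (r i + 1 : ℕ)) := by
    rw [coeff_pderiv, coeff_pderiv, add_assoc, ← Finsupp.single_add, Finsupp.add_apply,
      Finsupp.single_eq_same]
    push_cast
    ring
  have hleft : coeff l (u * pderiv i (pderiv i p)) =
      coeff 0 u * coeff l (pderiv i (pderiv i p)) :=
    coeff_mul_eq_coeff_zero_mul fun r hr => by
      rw [hsecond, hlower _ (add_lt_add_left hr _), zero_mul]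
  have hright : coeff l (a * p + b * pderiv i p) = 0 := by
    rw [coeff_add, coeff_mul_eq_zero, coeff_mul_eq_zero, add_zero]
    · intro r hr
      rw [coeff_pderiv, hlower _ (add_lt_add_of_le_of_lt hr hsingle), zero_mul]
    · exact fun r hr => hlower r (hr.trans_lt
        (lt_add_of_pos_right l (pos_of_gt hsingle)))
  rw [hode, hright, hsecond] at hleft
  by_contra hne
  have hle := monomial_le_degreeOf i (mem_support_iff.2 hne)
  rw [Finsupp.add_apply, Finsupp.single_eq_same] at hle
  exact mul_ne_zero hu (mul_ne_zero hne (mul_ne_zero (hchar _ (by omega) hle)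
    (hchar _ (by omega) (by omega)))) hleft.symm

lemma eq_zero_of_second_order [IsDomain R] {p : MvPolynomial σ R}
    (hchar : ∀ i, ∀ k : ℕ, 0 < k → k ≤ p.degreeOf i → (k : R) ≠ 0)
    (hode : ∀ i, ∃ u a b : MvPolynomial σ R, coeff 0 u ≠ 0 ∧
      u * pderiv i (pderiv i p) = a * p + b * pderiv i p)
    (hcoeff : ∀ m : σ →₀ ℕ, (∀ i, m i ≤ 1) → coeff m p = 0) : p = 0 := by
  ext m
  rw [coeff_zero]
  induction m using WellFoundedLT.induction with
  | _ m ih =>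
    by_cases hm : ∀ i, m i ≤ 1
    · exact hcoeff m hm
    · push Not at hm
      obtain ⟨i, hi⟩ := hm
      obtain ⟨u, a, b, hu, h⟩ := hode i
      exact coeff_eq_zero_of_second_order (hchar i) hu h hi ih

end MultivariatePolynomials

/-- A line transverse to the `0`-th coordinate of `F³` and contained in a plane on which one of the
other two coordinates is constant, equal to `base`; along it the `0`-th coordinate is the affine
function of the remaining coordinate with the given slope and intercept. Which coordinate is
constant is not recorded: the two choices give the two families of lines. -/
@[ext] structure RulingLine (F : Type*) where
  base : F
  slope : F
  intercept : F

namespace RulingLine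

section Restriction

open MvPolynomial
open scoped Polynomial

variable {F : Type*} [Field F]

/-- Restriction of polynomials to the line `a`, seen as a line of the family along which the
coordinate `i.succ` is free; that coordinate is the parameter. -/
noncomputable def restrict (i : Fin 2) (a : RulingLine F) : MvPolynomial (Fin 3) F →ₐ[F] F[X] :=
  aeval (Fin.cons (Polynomial.C a.slope * Polynomial.X + Polynomial.C a.intercept)
    (Function.update (fun _ => Polynomial.C a.base) i Polynomial.X) : Fin 3 → F[X])

lemma restrict_X_zero (i : Fin 2) (a : RulingLine F) :
    a.restrict i (X 0) = Polynomial.C a.slope * Polynomial.X + Polynomial.C a.intercept :=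
  aeval_X _ _

lemma restrict_X_succ_self (i : Fin 2) (a : RulingLine F) :
    a.restrict i (X i.succ) = Polynomial.X := by
  rw [restrict, aeval_X, Fin.cons_succ, Function.update_self]

lemma restrict_X_succ_of_ne {i j : Fin 2} (hij : i ≠ j) (a : RulingLine F) :
    a.restrict i (X j.succ) = Polynomial.C a.base := by
  rw [restrict, aeval_X, Fin.cons_succ, Function.update_of_ne hij.symm]

lemma natDegree_restrict_le (i : Fin 2) (a : RulingLine F) (P : MvPolynomial (Fin 3) F) :
    (a.restrict i P).natDegree ≤ P.totalDegree := by
  refine (aeval_natDegree_le P le_rfl _ (n := 1) fun k => ?_).trans_eq (mul_one _)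
  refine Fin.cases ?_ (fun l => ?_) k
  · exact Polynomial.natDegree_linear_le
  · rw [Fin.cons_succ]
    rcases eq_or_ne l i with rfl | hl
    · rw [Function.update_self]
      exact Polynomial.natDegree_X_le
    · rw [Function.update_of_ne hl, Polynomial.natDegree_C]
      exact zero_le_one

lemma derivative_restrict (i : Fin 2) (a : RulingLine F) (P : MvPolynomial (Fin 3) F) :
    Polynomial.derivative (a.restrict i P) =
      Polynomial.C a.slope * a.restrict i (pderiv 0 P) + a.restrict i (pderiv i.succ P) := by
  have hD := derivation_aeval (Polynomial.derivative' (R := F)) (Fin.cons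
    (Polynomial.C a.slope * Polynomial.X + Polynomial.C a.intercept)
    (Function.update (fun _ => Polynomial.C a.base) i Polynomial.X) : Fin 3 → F[X]) P
  rw [Fin.sum_univ_succ, sum_eq_single_of_mem i (mem_univ i) fun l _ hl => ?_] at hD
  · refine hD.trans ?_
    rw [Fin.cons_zero, Fin.cons_succ, Function.update_self]
    simp only [Polynomial.derivative'_apply, Polynomial.derivative_add,
      Polynomial.derivative_C_mul, Polynomial.derivative_C, Polynomial.derivative_X, mul_one,
      add_zero]
    rw [mul_comm]
    rfl
  · rw [Fin.cons_succ, Function.update_of_ne hl, Polynomial.derivative'_apply,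
      Polynomial.derivative_C, mul_zero]

end Restriction

/-- The incidence relation between a line of one family and a line of the other family. -/
def Meets {F : Type*} [Field F] (a b : RulingLine F) : Prop :=
  a.base * b.slope + b.intercept = a.slope * b.base + a.intercept

lemma meets_comm {F : Type*} [Field F] {a b : RulingLine F} : a.Meets b ↔ b.Meets a := by
  rw [Meets, Meets, eq_comm, mul_comm a.slope, mul_comm a.base]

lemma Meets.eval_restrict {F : Type*} [Field F] {a b : RulingLine F} (h : a.Meets b) {i j : Fin 2}
    (hij : i ≠ j) (P : MvPolynomial (Fin 3) F) :
    (a.restrict i P).eval b.base = (b.restrict j P).eval a.base := by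
  have hcomp : (Polynomial.aeval b.base).comp (a.restrict i) =
      (Polynomial.aeval a.base).comp (b.restrict j) := by
    refine MvPolynomial.algHom_ext fun k => ?_
    rw [AlgHom.comp_apply, AlgHom.comp_apply]
    refine Fin.cases ?_ (fun l => ?_) k
    · simp only [restrict_X_zero, map_add, map_mul, Polynomial.aeval_X, Polynomial.aeval_C,
        Algebra.algebraMap_self, RingHom.id_apply]
      rw [← h, mul_comm]
    · rcases eq_or_ne l i with rfl | hl
      · simp [restrict_X_succ_self, restrict_X_succ_of_ne hij.symm]
      · obtain rfl : l = j := by omega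
        simp [restrict_X_succ_self, restrict_X_succ_of_ne hij]
  simpa [Polynomial.coe_aeval_eq_eval] using DFunLike.congr_fun hcomp P

end RulingLine

section Flecnode

open MvPolynomial

variable {F : Type*} [Field F]

/-- The flecnode polynomial of the surface `P = 0` in the directions `i.succ` and `0`: up to the
factor `(∂P/∂x₀)²`, the second derivative of `P` along a direction tangent to the surface. It
vanishes on every line of the family `i` contained in the surface. -/
noncomputable def flecnode (i : Fin 2) (P : MvPolynomial (Fin 3) F) : MvPolynomial (Fin 3) F :=
  pderiv i.succ (pderiv i.succ P) * pderiv 0 P ^ 2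
    - 2 * (pderiv i.succ (pderiv 0 P) * (pderiv i.succ P * pderiv 0 P))
    + pderiv 0 (pderiv 0 P) * pderiv i.succ P ^ 2

lemma restrict_flecnode_eq_zero {i : Fin 2} {a : RulingLine F} {P : MvPolynomial (Fin 3) F}
    (h : a.restrict i P = 0) : a.restrict i (flecnode i P) = 0 := by
  have hfirst := a.derivative_restrict i P
  have hsecond := congrArg Polynomial.derivative hfirst
  rw [h, Polynomial.derivative_zero] at hfirst hsecond
  simp only [Polynomial.derivative_zero, Polynomial.derivative_add, Polynomial.derivative_C_mul,
    RulingLine.derivative_restrict, pderiv_pderiv_comm 0 i.succ P] at hsecond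
  have hslope : a.restrict i (pderiv i.succ P) =
      -(Polynomial.C a.slope * a.restrict i (pderiv 0 P)) := by linear_combination -hfirst
  simp only [flecnode, map_add, map_sub, map_mul, map_pow, map_ofNat, hslope]
  linear_combination -a.restrict i (pderiv 0 P) ^ 2 * hsecond

lemma totalDegree_flecnode_le (i : Fin 2) (P : MvPolynomial (Fin 3) F) :
    (flecnode i P).totalDegree ≤ 3 * P.totalDegree := by
  have hone (k : Fin 3) : (pderiv k P).totalDegree ≤ P.totalDegree :=
    (totalDegree_pderiv_le k P).trans (Nat.sub_le _ _)
  have htwo (k l : Fin 3) : (pderiv k (pderiv l P)).totalDegree ≤ P.totalDegree :=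
    ((totalDegree_pderiv_le k _).trans (Nat.sub_le _ _)).trans (hone l)
  have hmul {d e : ℕ} {p q : MvPolynomial (Fin 3) F} (hp : p.totalDegree ≤ d)
      (hq : q.totalDegree ≤ e) : (p * q).totalDegree ≤ d + e :=
    (totalDegree_mul p q).trans (Nat.add_le_add hp hq)
  have hsq (k : Fin 3) : (pderiv k P ^ 2).totalDegree ≤ P.totalDegree + P.totalDegree := by
    rw [sq]
    exact hmul (hone k) (hone k)
  have hcross : (2 * (pderiv i.succ (pderiv 0 P) * (pderiv i.succ P * pderiv 0 P))).totalDegree ≤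
      0 + (P.totalDegree + (P.totalDegree + P.totalDegree)) :=
    hmul (totalDegree_C (2 : F)).le (hmul (htwo _ _) (hmul (hone _) (hone _)))
  refine (totalDegree_add _ _).trans (max_le ((totalDegree_sub _ _).trans (max_le ?_ ?_)) ?_)
  · exact (hmul (htwo _ _) (hsq _)).trans (by omega)
  · exact hcross.trans (by omega)
  · exact (hmul (htwo _ _) (hsq _)).trans (by omega)

end Flecnode

section Bezout

open MvPolynomial
open scoped Polynomial

lemma totalDegree_resultant_le {σ R : Type*} [CommRing R] {f g : (MvPolynomial σ R)[X]}
    {D E : ℕ} (m n : ℕ) (hf : ∀ k, (f.coeff k).totalDegree ≤ D)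
    (hg : ∀ k, (g.coeff k).totalDegree ≤ E) :
    (Polynomial.resultant f g m n).totalDegree ≤ m * E + n * D := by
  rw [Polynomial.resultant, Matrix.det_apply']
  refine totalDegree_finsetSum_le fun τ _ => (totalDegree_mul _ _).trans ?_
  have hsign : ((Equiv.Perm.sign τ : ℤ) : MvPolynomial σ R).totalDegree = 0 := by
    rw [← map_intCast (C : R →+* MvPolynomial σ R)]
    exact totalDegree_C _
  rw [hsign, zero_add]
  refine (totalDegree_finsetProd _ _).trans ?_
  rw [Fin.sum_univ_add]
  refine Nat.add_le_add ?_ ?_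
  · refine (sum_le_card_nsmul _ _ E fun k _ => ?_).trans_eq (by rw [card_fin, smul_eq_mul])
    simp only [Polynomial.sylvester, Matrix.of_apply, Fin.addCases_left]
    split_ifs
    · exact hg _
    · exact totalDegree_zero.trans_le (Nat.zero_le _)
  · refine (sum_le_card_nsmul _ _ D fun k _ => ?_).trans_eq (by rw [card_fin, smul_eq_mul])
    simp only [Polynomial.sylvester, Matrix.of_apply, Fin.addCases_right]
    split_ifs
    · exact hf _
    · exact totalDegree_zero.trans_le (Nat.zero_le _)

lemma resultant_ne_zero_of_irreducible {R : Type*} [CommRing R] [IsDomain R]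
    [UniqueFactorizationMonoid R] {p q : R[X]} (hp : Irreducible p) (hdeg : p.natDegree ≠ 0)
    (hpq : ¬p ∣ q) : Polynomial.resultant p q ≠ 0 := by
  let _ : NormalizedGCDMonoid R := Classical.choice inferInstance
  have hprim : p.IsPrimitive := hp.isPrimitive hdeg
  have hinj := IsFractionRing.injective R (FractionRing R)
  have hcoprime : IsCoprime (p.map (algebraMap R (FractionRing R)))
      (q.map (algebraMap R (FractionRing R))) :=
    ((hprim.irreducible_iff_irreducible_map_fraction_map).1 hp).coprime_iff_not_dvd.2
      fun h => hpq (hprim.dvd_of_fraction_map_dvd_fraction_map h)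
  have hmap := Polynomial.resultant_ne_zero _ _ hcoprime
  rw [Polynomial.natDegree_map_eq_of_injective hinj, Polynomial.natDegree_map_eq_of_injective hinj,
    Polynomial.resultant_map_map] at hmap
  exact fun h => hmap (by rw [h, map_zero])

variable {F : Type*} [Field F]

lemma totalDegree_coeff_finSuccEquiv_le {n : ℕ} (P : MvPolynomial (Fin (n + 1)) F) (k : ℕ) :
    ((finSuccEquiv F n P).coeff k).totalDegree ≤ P.totalDegree := by
  by_cases h : (finSuccEquiv F n P).coeff k = 0
  · rw [h, totalDegree_zero]
    exact Nat.zero_le _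
  · exact le_of_add_le_left (totalDegree_coeff_finSuccEquiv_add_le P k h)

lemma RulingLine.eval₂_finSuccEquiv (i : Fin 2) (a : RulingLine F) (P : MvPolynomial (Fin 3) F) :
    (finSuccEquiv F 2 P).eval₂
      (aeval (Function.update (fun _ => Polynomial.C a.base) i Polynomial.X) :
        MvPolynomial (Fin 2) F →ₐ[F] F[X]).toRingHom
      (Polynomial.C a.slope * Polynomial.X + Polynomial.C a.intercept) = a.restrict i P := by
  induction P using MvPolynomial.induction_on with
  | C x => simp [restrict, finSuccEquiv_apply]
  | add p q hp hq => rw [map_add, map_add, Polynomial.eval₂_add, hp, hq]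
  | mul_X p k hp =>
    rw [map_mul, map_mul, Polynomial.eval₂_mul, hp]
    congr 1
    refine Fin.cases ?_ (fun l => ?_) k
    · rw [finSuccEquiv_X_zero, Polynomial.eval₂_X, restrict_X_zero]
    · rw [finSuccEquiv_X_succ, Polynomial.eval₂_C, restrict, aeval_X, Fin.cons_succ]
      exact aeval_X _ l

lemma X_sub_C_dvd_of_aeval_update_eq_zero {i j : Fin 2} (hij : i ≠ j) {α : F}
    {R : MvPolynomial (Fin 2) F}
    (h : (aeval (Function.update (fun _ => Polynomial.C α) i Polynomial.X) R : F[X]) = 0) :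
    X j - C α ∣ R := by
  have hcomp : (Polynomial.aeval (X i : MvPolynomial (Fin 2) F)).comp
      (aeval (Function.update (fun _ => Polynomial.C α) i Polynomial.X)) =
      aeval (Function.update X j (C α)) := by
    refine algHom_ext fun k => ?_
    rw [AlgHom.comp_apply, aeval_X, aeval_X]
    rcases eq_or_ne k i with rfl | hk
    · rw [Function.update_self, Function.update_of_ne hij, Polynomial.aeval_X]
    · obtain rfl : k = j := by omega
      rw [Function.update_self, Function.update_of_ne hk, Polynomial.aeval_C, algebraMap_eq]
  have hdvd := X_sub_dvd_sub_aeval_update j (C α) R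
  rwa [← hcomp, AlgHom.comp_apply, h, map_zero, sub_zero] at hdvd

/-- Eliminating `x₀` by a resultant turns common lines into linear factors of a polynomial in the
other two variables. -/
lemma card_le_of_restrict_eq_zero (i : Fin 2) {P Q : MvPolynomial (Fin 3) F}
    (hP : Irreducible P) (hZ : P.degreeOf 0 ≠ 0) (hPQ : ¬P ∣ Q) {A : Finset (RulingLine F)}
    (hA : Set.InjOn RulingLine.base (A : Set (RulingLine F))) (hAP : ∀ a ∈ A, a.restrict i P = 0)
    (hAQ : ∀ a ∈ A, a.restrict i Q = 0) : #A ≤ 2 * P.totalDegree * Q.totalDegree := by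
  classical
  obtain ⟨j, hij⟩ : ∃ j, i ≠ j := (exists_ne i).imp fun _ => Ne.symm
  set p := finSuccEquiv F 2 P with hp
  set q := finSuccEquiv F 2 Q
  have hpdeg : p.natDegree ≠ 0 := by rwa [hp, natDegree_finSuccEquiv]
  have hres : Polynomial.resultant p q ≠ 0 :=
    resultant_ne_zero_of_irreducible ((MulEquiv.irreducible_iff (finSuccEquiv F 2)).2 hP) hpdeg
      fun h => hPQ ((map_dvd_iff (finSuccEquiv F 2)).1 h)
  obtain ⟨u, v, -, -, huv⟩ :=
    Polynomial.exists_mul_add_mul_eq_C_resultant p q le_rfl le_rfl (Or.inl hpdeg)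
  have hdvd : ∀ α ∈ A.image RulingLine.base, X j - C α ∣ Polynomial.resultant p q := by
    simp only [mem_image, forall_exists_index, and_imp, forall_apply_eq_imp_iff₂]
    intro a ha
    have heval := congrArg (Polynomial.eval₂
      (aeval (Function.update (fun _ => Polynomial.C a.base) i Polynomial.X) :
        MvPolynomial (Fin 2) F →ₐ[F] F[X]).toRingHom
      (Polynomial.C a.slope * Polynomial.X + Polynomial.C a.intercept)) huv
    rw [Polynomial.eval₂_add, Polynomial.eval₂_mul, Polynomial.eval₂_mul, a.eval₂_finSuccEquiv,
      a.eval₂_finSuccEquiv, hAP a ha, hAQ a ha, zero_mul, zero_mul, add_zero,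
      Polynomial.eval₂_C] at heval
    exact X_sub_C_dvd_of_aeval_update_eq_zero hij heval.symm
  have hdeg (G : MvPolynomial (Fin 3) F) : (finSuccEquiv F 2 G).natDegree ≤ G.totalDegree := by
    rw [natDegree_finSuccEquiv]
    exact degreeOf_le_totalDegree _ _
  calc #A = #(A.image RulingLine.base) := (card_image_of_injOn hA).symm
    _ ≤ (Polynomial.resultant p q).totalDegree := card_le_totalDegree_of_X_sub_C_dvd hres hdvd
    _ ≤ p.natDegree * Q.totalDegree + q.natDegree * P.totalDegree :=
        totalDegree_resultant_le _ _ (totalDegree_coeff_finSuccEquiv_le P)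
          (totalDegree_coeff_finSuccEquiv_le Q)
    _ ≤ P.totalDegree * Q.totalDegree + Q.totalDegree * P.totalDegree :=
        Nat.add_le_add (Nat.mul_le_mul_right _ (hdeg P)) (Nat.mul_le_mul_right _ (hdeg Q))
    _ = 2 * P.totalDegree * Q.totalDegree := by ring

lemma X_sub_C_dvd_of_restrict_eq_zero {i j : Fin 2} (hij : i ≠ j) {P : MvPolynomial (Fin 3) F}
    (hZ : P.degreeOf 0 = 0) {a : RulingLine F} (h : a.restrict i P = 0) :
    X j.succ - C a.base ∣ P := by
  have hcomp : (Polynomial.aeval (X i.succ : MvPolynomial (Fin 3) F)).comp (a.restrict i) =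
      aeval (fun k => Polynomial.aeval (X i.succ) (a.restrict i (X k))) := aeval_unique _
  have hcongr : aeval (Function.update X j.succ (C a.base)) P =
      Polynomial.aeval (X i.succ : MvPolynomial (Fin 3) F) (a.restrict i P) := by
    rw [← AlgHom.comp_apply, hcomp]
    refine aeval_eq_of_degreeOf_eq_zero hZ fun k hk => ?_
    obtain ⟨l, rfl⟩ := Fin.exists_succ_eq.2 hk
    rcases eq_or_ne l i with rfl | hl
    · rw [Function.update_of_ne ((Fin.succ_injective _).ne hij),
        RulingLine.restrict_X_succ_self, Polynomial.aeval_X]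
    · obtain rfl : l = j := by omega
      rw [Function.update_self, RulingLine.restrict_X_succ_of_ne hij, Polynomial.aeval_C,
        algebraMap_eq]
  have hdvd := X_sub_dvd_sub_aeval_update j.succ (C a.base) P
  rwa [hcongr, h, map_zero, sub_zero] at hdvd

lemma degreeOf_zero_ne_zero_of_restrict_eq_zero {i j : Fin 2} (hij : i ≠ j)
    {P : MvPolynomial (Fin 3) F} (hP : Irreducible P) {a b : RulingLine F} (ha : a.restrict i P = 0)
    (hb : b.restrict j P = 0) : P.degreeOf 0 ≠ 0 := by
  intro hZ
  have hunit (k : Fin 3) (α : F) : ¬IsUnit (X k - C α : MvPolynomial (Fin 3) F) := by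
    intro h
    have := h.map (eval fun _ => α)
    rw [map_sub, eval_X, eval_C, sub_self] at this
    exact not_isUnit_zero this
  have hassoc {k : Fin 3} {α : F} (h : X k - C α ∣ P) : P ∣ X k - C α :=
    (hP.dvd_iff.1 h).elim (fun hu => absurd hu (hunit k α)) fun h => h.dvd
  have hdvd : X j.succ - C a.base ∣ (X i.succ - C b.base : MvPolynomial (Fin 3) F) :=
    (X_sub_C_dvd_of_restrict_eq_zero hij hZ ha).trans
      (hassoc (X_sub_C_dvd_of_restrict_eq_zero hij.symm hZ hb))
  have heval := map_dvd (eval (Function.update (fun _ => a.base) i.succ (b.base + 1))) hdvd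
  rw [map_sub, map_sub, eval_X, eval_X, eval_C, eval_C, Function.update_self,
    Function.update_of_ne ((Fin.succ_injective _).ne hij.symm), sub_self, add_sub_cancel_left,
    zero_dvd_iff] at heval
  exact one_ne_zero heval

end Bezout

section RuledSurfaces

open MvPolynomial

variable {F : Type*} [Field F]

/-- Substitution of `(φ, x₀ + v₁, x₁ + v₂)` for the three coordinates: the restriction of
polynomials to the graph of `φ`, centred at the point `v`. -/
noncomputable def graphSubst (v : Fin 3 → F) (φ : MvPolynomial (Fin 2) F) :
    MvPolynomial (Fin 3) F →ₐ[F] MvPolynomial (Fin 2) F :=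
  aeval (Fin.cons φ fun k => X k + C (v k.succ) : Fin 3 → MvPolynomial (Fin 2) F)

lemma pderiv_graphSubst (v : Fin 3 → F) (φ : MvPolynomial (Fin 2) F) (i : Fin 2)
    (P : MvPolynomial (Fin 3) F) :
    pderiv i (graphSubst v φ P) =
      graphSubst v φ (pderiv 0 P) * pderiv i φ + graphSubst v φ (pderiv i.succ P) := by
  have hD := derivation_aeval (pderiv i)
    (Fin.cons φ fun k => X k + C (v k.succ) : Fin 3 → MvPolynomial (Fin 2) F) P
  rw [Fin.sum_univ_succ, sum_eq_single_of_mem i (mem_univ i) fun l _ hl => ?_] at hD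
  · refine hD.trans ?_
    rw [Fin.cons_zero, Fin.cons_succ, map_add, pderiv_X_self, pderiv_C, add_zero, mul_one]
    rfl
  · rw [Fin.cons_succ, map_add, pderiv_X_of_ne hl, pderiv_C, add_zero, mul_zero]

/-- The flecnode equation, read along a graph without second derivatives in the direction `i`, is a
second order linear differential equation for the restriction of `P`. -/
lemma graphSubst_second_order {v : Fin 3 → F} {φ : MvPolynomial (Fin 2) F} {i : Fin 2}
    (hφ : pderiv i (pderiv i φ) = 0) {P : MvPolynomial (Fin 3) F} (hP : P ∣ flecnode i P) :
    ∃ a b, graphSubst v φ (pderiv 0 P) ^ 2 * pderiv i (pderiv i (graphSubst v φ P)) =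
      a * graphSubst v φ P + b * pderiv i (graphSubst v φ P) := by
  obtain ⟨G, hG⟩ := hP
  have hflec := congrArg (graphSubst v φ) hG
  simp only [flecnode, map_add, map_sub, map_mul, map_pow, map_ofNat] at hflec
  refine ⟨graphSubst v φ G, 2 * graphSubst v φ (pderiv i.succ (pderiv 0 P)) *
    graphSubst v φ (pderiv 0 P) + graphSubst v φ (pderiv 0 (pderiv 0 P)) *
      (pderiv i (graphSubst v φ P) - 2 * graphSubst v φ (pderiv i.succ P)), ?_⟩
  simp only [pderiv_graphSubst, map_add, pderiv_mul, hφ, pderiv_pderiv_comm 0 i.succ P]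
  linear_combination hflec

/-- The polynomials whose graphs are the quadrics ruled by lines of both families, with the given
coefficients. -/
noncomputable def bilinear (w β γ δ : F) : MvPolynomial (Fin 2) F :=
  C w * (X 0 * X 1) + C β * X 0 + C γ * X 1 + C δ

lemma pderiv_zero_bilinear (w β γ δ : F) :
    pderiv 0 (bilinear w β γ δ) = C w * X 1 + C β := by
  simp [bilinear, pderiv_X]

lemma pderiv_one_bilinear (w β γ δ : F) :
    pderiv 1 (bilinear w β γ δ) = C w * X 0 + C γ := by
  simp [bilinear, pderiv_X]

lemma pderiv_pderiv_bilinear (w β γ δ : F) (i : Fin 2) :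
    pderiv i (pderiv i (bilinear w β γ δ)) = 0 := by
  fin_cases i
  · simp [pderiv_zero_bilinear, pderiv_X]
  · simp [pderiv_one_bilinear, pderiv_X]

lemma degreeOf_bilinear_le (w β γ δ : F) (i : Fin 2) : (bilinear w β γ δ).degreeOf i ≤ 1 := by
  have hX (k : Fin 2) (c : F) : (C c * X k : MvPolynomial (Fin 2) F).degreeOf i ≤ 1 := by
    refine (degreeOf_C_mul_le _ i c).trans ?_
    rw [degreeOf_X]
    split_ifs <;> decide
  have hXX : (C w * (X 0 * X 1) : MvPolynomial (Fin 2) F).degreeOf i ≤ 1 := by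
    refine (degreeOf_C_mul_le _ i w).trans ((degreeOf_mul_le i _ _).trans ?_)
    rw [degreeOf_X, degreeOf_X]
    fin_cases i <;> decide
  have hC : (C δ : MvPolynomial (Fin 2) F).degreeOf i ≤ 1 := by simp
  exact (degreeOf_add_le i _ _).trans (max_le ((degreeOf_add_le i _ _).trans
    (max_le ((degreeOf_add_le i _ _).trans (max_le hXX (hX 0 β))) (hX 1 γ))) hC)

lemma degreeOf_graphSubst_bilinear_le (v : Fin 3 → F) (w β γ δ : F) (i : Fin 2)
    (P : MvPolynomial (Fin 3) F) :
    (graphSubst v (bilinear w β γ δ) P).degreeOf i ≤ P.totalDegree := by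
  refine degreeOf_aeval_le (fun k => ?_) P
  refine Fin.cases (degreeOf_bilinear_le w β γ δ i) (fun l => ?_) k
  refine (degreeOf_add_le i _ _).trans (max_le ?_ ((degreeOf_C _ i).trans_le zero_le_one))
  rw [degreeOf_X]
  split_ifs <;> decide

lemma constantCoeff_graphSubst (v : Fin 3 → F) (w β γ : F) (P : MvPolynomial (Fin 3) F) :
    constantCoeff (graphSubst v (bilinear w β γ (v 0)) P) = eval v P := by
  induction P using MvPolynomial.induction_on with
  | C a => simp [graphSubst]
  | add p q hp hq => rw [map_add, map_add, map_add, hp, hq]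
  | mul_X p k hp =>
    rw [map_mul, map_mul, map_mul, hp, eval_X, graphSubst, aeval_X]
    refine congrArg (eval v p * ·) (Fin.cases ?_ (fun l => ?_) k)
    · simp [bilinear]
    · simp

lemma coeff_eq_zero_of_constantCoeff {q : MvPolynomial (Fin 2) F} (h : constantCoeff q = 0)
    (h₀ : constantCoeff (pderiv 0 q) = 0) (h₁ : constantCoeff (pderiv 1 q) = 0)
    (h₀₁ : constantCoeff (pderiv 0 (pderiv 1 q)) = 0) {m : Fin 2 →₀ ℕ} (hm : ∀ i, m i ≤ 1) :
    coeff m q = 0 := by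
  simp only [constantCoeff_eq, coeff_pderiv] at h h₀ h₁ h₀₁
  have hm_eq : m = Finsupp.single 0 (m 0) + Finsupp.single 1 (m 1) := by
    ext i
    fin_cases i <;> simp
  rw [hm_eq]
  have h0 := hm 0
  have h1 := hm 1
  interval_cases m 0 <;> interval_cases m 1 <;> simp_all

/-- The coefficients of the bilinear polynomial are forced by the first derivatives and the mixed
second derivative of the surface at `v`. -/
lemma exists_graphSubst_bilinear_eq_zero {P : MvPolynomial (Fin 3) F}
    (hdvd : ∀ i, P ∣ flecnode i P) {v : Fin 3 → F} (hv : eval v P = 0)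
    (hv₀ : eval v (pderiv 0 P) ≠ 0)
    (hchar : ∀ k : ℕ, 0 < k → k ≤ P.totalDegree → (k : F) ≠ 0) :
    ∃ w β γ, graphSubst v (bilinear w β γ (v 0)) P = 0 := by
  set Z := eval v (pderiv 0 P) with hZ
  set β := -eval v (pderiv 1 P) / Z with hβ
  set γ := -eval v (pderiv 2 P) / Z with hγ
  set w := -((eval v (pderiv 0 (pderiv 0 P)) * β + eval v (pderiv 1 (pderiv 0 P))) * γ +
    (eval v (pderiv 0 (pderiv 2 P)) * β + eval v (pderiv 1 (pderiv 2 P)))) / Z with hw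
  refine ⟨w, β, γ, eq_zero_of_second_order
    (fun i k hk hle => hchar k hk (hle.trans (degreeOf_graphSubst_bilinear_le v w β γ _ i P)))
    (fun i => ?_) (fun m => coeff_eq_zero_of_constantCoeff ?_ ?_ ?_ ?_)⟩
  · obtain ⟨a, b, hab⟩ := graphSubst_second_order (v := v)
      (pderiv_pderiv_bilinear w β γ (v 0) i) (hdvd i)
    refine ⟨_, a, b, ?_, hab⟩
    rw [← constantCoeff_eq, map_pow, constantCoeff_graphSubst]
    exact pow_ne_zero 2 hv₀
  · rw [constantCoeff_graphSubst, hv]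
  · simp only [pderiv_graphSubst, pderiv_zero_bilinear, map_add, map_mul,
      constantCoeff_graphSubst, constantCoeff_C, constantCoeff_X, Fin.succ_zero_eq_one]
    rw [← hZ, hβ]
    field_simp
    ring
  · simp only [pderiv_graphSubst, pderiv_one_bilinear, map_add, map_mul,
      constantCoeff_graphSubst, constantCoeff_C, constantCoeff_X, Fin.succ_one_eq_two]
    rw [← hZ, hγ]
    field_simp
    ring
  · simp only [pderiv_graphSubst, pderiv_one_bilinear, pderiv_zero_bilinear, pderiv_mul, pderiv_C,
      pderiv_X_self, map_add, map_mul, map_one, map_zero, constantCoeff_graphSubst,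
      constantCoeff_C, constantCoeff_X, Fin.succ_zero_eq_one, Fin.succ_one_eq_two]
    rw [← hZ, hw]
    field_simp
    ring

lemma X_zero_sub_dvd_of_graphSubst_eq_zero {v : Fin 3 → F} {φ : MvPolynomial (Fin 2) F}
    {P : MvPolynomial (Fin 3) F} (h : graphSubst v φ P = 0) :
    X 0 - aeval (fun k : Fin 2 => (X k.succ - C (v k.succ) : MvPolynomial (Fin 3) F)) φ ∣ P := by
  set τ : MvPolynomial (Fin 2) F →ₐ[F] MvPolynomial (Fin 3) F :=
    aeval fun k => X k.succ - C (v k.succ) with hτ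
  have hcomp : τ.comp (graphSubst v φ) = aeval (Function.update X 0 (τ φ)) := by
    refine algHom_ext fun k => ?_
    rw [AlgHom.comp_apply, graphSubst, aeval_X, aeval_X]
    refine Fin.cases ?_ (fun l => ?_) k
    · rw [Fin.cons_zero, Function.update_self]
    · rw [Fin.cons_succ, Function.update_of_ne (Fin.succ_ne_zero l), map_add, hτ, aeval_X,
        algHom_C, algebraMap_eq, sub_add_cancel]
  have hdvd := X_sub_dvd_sub_aeval_update 0 (τ φ) P
  rwa [← hcomp, AlgHom.comp_apply, h, map_zero, sub_zero] at hdvd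

lemma not_isUnit_X_zero_sub_rename (φ : MvPolynomial (Fin 2) F) :
    ¬IsUnit (X 0 - rename Fin.succ φ : MvPolynomial (Fin 3) F) := by
  intro h
  have hunit := h.map (aeval (Fin.cons φ X : Fin 3 → MvPolynomial (Fin 2) F))
  have hcomp : (Fin.cons φ X : Fin 3 → MvPolynomial (Fin 2) F) ∘ Fin.succ = X := rfl
  rw [map_sub, aeval_X, aeval_rename, hcomp, aeval_X_left_apply, Fin.cons_zero, sub_self] at hunit
  exact not_isUnit_zero hunit

lemma exists_dvd_X_zero_sub_bilinear {P : MvPolynomial (Fin 3) F} (hP : Irreducible P)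
    (hdvd : ∀ i, P ∣ flecnode i P) {v : Fin 3 → F} (hv : eval v P = 0)
    (hv₀ : eval v (pderiv 0 P) ≠ 0)
    (hchar : ∀ k : ℕ, 0 < k → k ≤ P.totalDegree → (k : F) ≠ 0) :
    ∃ w β γ δ, P ∣ X 0 - rename Fin.succ (bilinear w β γ δ) := by
  obtain ⟨w, β, γ, h⟩ := exists_graphSubst_bilinear_eq_zero hdvd hv hv₀ hchar
  refine ⟨w, β - w * v 2, γ - w * v 1, v 0 - β * v 1 - γ * v 2 + w * v 1 * v 2, ?_⟩
  have hfactor := X_zero_sub_dvd_of_graphSubst_eq_zero h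
  have htranslate : aeval (fun k : Fin 2 => (X k.succ - C (v k.succ) : MvPolynomial (Fin 3) F))
      (bilinear w β γ (v 0)) = rename Fin.succ (bilinear w (β - w * v 2) (γ - w * v 1)
        (v 0 - β * v 1 - γ * v 2 + w * v 1 * v 2)) := by
    simp only [bilinear, map_add, map_mul, map_sub, aeval_X, algHom_C, algebraMap_eq, rename_X,
      Fin.succ_zero_eq_one, Fin.succ_one_eq_two]
    ring
  rw [htranslate] at hfactor
  exact ((hP.dvd_iff.1 hfactor).resolve_left (not_isUnit_X_zero_sub_rename _)).dvd

end RuledSurfaces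

namespace RulingLine

/-- The lines of one family that are contained in the quadric
`x₀ = w x₁ x₂ + β x₁ + γ x₂ + δ`, the family being the one along which `x₂` is free; for the other
family the roles of `β` and `γ` are exchanged. -/
def OnQuadric {F : Type*} [Field F] (w β γ δ : F) (a : RulingLine F) : Prop :=
  a.slope = w * a.base + γ ∧ a.intercept = β * a.base + δ

lemma onQuadric_of_linear_eq {F : Type*} [Field F] {w β γ δ : F} {a : RulingLine F}
    (h : (Polynomial.C a.slope * Polynomial.X + Polynomial.C a.intercept : Polynomial F) =
      Polynomial.C (w * a.base + γ) * Polynomial.X + Polynomial.C (β * a.base + δ)) :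
    a.OnQuadric w β γ δ := by
  have h0 := congrArg (Polynomial.coeff · 0) h
  have h1 := congrArg (Polynomial.coeff · 1) h
  simp only [Polynomial.coeff_add, Polynomial.coeff_C_mul, Polynomial.coeff_X_zero,
    Polynomial.coeff_X_one, Polynomial.coeff_C_zero, Polynomial.coeff_C_succ, mul_zero, mul_one,
    zero_add, add_zero] at h0 h1
  exact ⟨h1, h0⟩

open MvPolynomial in
lemma restrict_rename_succ {F : Type*} [Field F] (i : Fin 2) (a : RulingLine F)
    (φ : MvPolynomial (Fin 2) F) : a.restrict i (rename Fin.succ φ) =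
      aeval (Function.update (fun _ => Polynomial.C a.base) i Polynomial.X) φ := by
  rw [restrict, aeval_rename]
  rfl

open MvPolynomial in
lemma exists_onQuadric {F : Type*} [Field F] {P : MvPolynomial (Fin 3) F} (hP : Irreducible P)
    (hdvd : ∀ i, P ∣ flecnode i P) {v : Fin 3 → F} (hv : eval v P = 0)
    (hv₀ : eval v (pderiv 0 P) ≠ 0)
    (hchar : ∀ k : ℕ, 0 < k → k ≤ P.totalDegree → (k : F) ≠ 0) :
    ∃ w β γ δ, (∀ a : RulingLine F, a.restrict 1 P = 0 → a.OnQuadric w β γ δ) ∧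
      ∀ b : RulingLine F, b.restrict 0 P = 0 → b.OnQuadric w γ β δ := by
  obtain ⟨w, β, γ, δ, hquadric⟩ := exists_dvd_X_zero_sub_bilinear hP hdvd hv hv₀ hchar
  have hrestrict (i : Fin 2) (a : RulingLine F) (ha : a.restrict i P = 0) :
      Polynomial.C a.slope * Polynomial.X + Polynomial.C a.intercept =
        a.restrict i (rename Fin.succ (bilinear w β γ δ)) := by
    have := map_dvd (a.restrict i) hquadric
    rwa [ha, zero_dvd_iff, map_sub, restrict_X_zero, sub_eq_zero] at this
  refine ⟨w, β, γ, δ, fun a ha => onQuadric_of_linear_eq ?_, fun b hb =>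
    onQuadric_of_linear_eq ?_⟩
  · rw [hrestrict 1 a ha, restrict_rename_succ]
    simp only [bilinear, map_add, map_mul, algHom_C, Polynomial.algebraMap_eq, aeval_X,
      Function.update_self, ne_eq, zero_ne_one, not_false_eq_true,
      Function.update_of_ne]
    ring
  · rw [hrestrict 0 b hb, restrict_rename_succ]
    simp only [bilinear, map_add, map_mul, algHom_C, Polynomial.algebraMap_eq, aeval_X,
      Function.update_self, ne_eq, one_ne_zero, not_false_eq_true,
      Function.update_of_ne]
    ring

end RulingLine

section Interpolation

open MvPolynomial

variable {F : Type*} [Field F]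

lemma exists_restrict_eq_zero_of_card_lt (i : Fin 2) {S : Finset (RulingLine F)} {m : ℕ}
    (h : #S * (3 * m) < m ^ 3) :
    ∃ P : MvPolynomial (Fin 3) F,
      P ≠ 0 ∧ P.totalDegree < 3 * m ∧ ∀ a ∈ S, a.restrict i P = 0 := by
  have hm : 0 < m := Nat.pos_of_ne_zero fun h0 => by simp [h0] at h
  let exponent (e : Fin 3 → Fin m) : Fin 3 →₀ ℕ := Finsupp.equivFunOnFinite.symm fun k => e k
  have hexponent : Function.Injective exponent := fun e e' hee' =>
    funext fun k => Fin.val_injective (congrFun (Finsupp.equivFunOnFinite.symm.injective hee') k)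
  let combine := Fintype.linearCombination F fun e => basisMonomials (Fin 3) F (exponent e)
  have hcombine : Function.Injective combine :=
    linearIndependent_iff_injective_fintypeLinearCombination.1
      ((basisMonomials (Fin 3) F).linearIndependent.comp exponent hexponent)
  let coefficients : MvPolynomial (Fin 3) F →ₗ[F] S × Fin (3 * m) → F :=
    LinearMap.pi fun x => Polynomial.lcoeff F x.2 ∘ₗ (x.1.1.restrict i).toLinearMap
  obtain ⟨c, hc, hc0⟩ := Submodule.exists_mem_ne_zero_of_ne_bot
    (LinearMap.ker_ne_bot_of_finrank_lt (f := coefficients ∘ₗ combine) (by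
      simpa [Module.finrank_fintype_fun_eq_card] using h))
  have hdeg : (combine c).totalDegree < 3 * m := by
    refine (totalDegree_finsetSum_le (d := 3 * (m - 1)) fun e _ => ?_).trans_lt (by omega)
    refine (totalDegree_smul_le _ _).trans ((totalDegree_monomial_le _ _).trans ?_)
    rw [Finsupp.sum_fintype _ _ fun _ => rfl]
    exact (sum_le_card_nsmul _ _ _ fun k _ => Nat.le_sub_one_of_lt (e k).2).trans_eq rfl
  refine ⟨combine c, (map_ne_zero_iff _ hcombine).2 hc0, hdeg, fun a ha => ?_⟩
  ext k
  rcases lt_or_ge k (3 * m) with hk | hk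
  · exact congrFun (LinearMap.mem_ker.1 hc) (⟨a, ha⟩, ⟨k, hk⟩)
  · exact Polynomial.coeff_eq_zero_of_natDegree_lt
      ((a.natDegree_restrict_le i _).trans_lt (hdeg.trans_le hk))

lemma exists_eval_ne_zero {q : Polynomial F} (hq : q ≠ 0)
    (hchar : ∀ k : ℕ, 0 < k → k ≤ q.natDegree → (k : F) ≠ 0) : ∃ t, q.eval t ≠ 0 := by
  by_contra! hzero
  refine hq (q.eq_zero_of_natDegree_lt_card_of_eval_eq_zero
    (f := fun k : Fin (q.natDegree + 1) => (k : F)) ?_ (fun _ => hzero _) (by simp))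
  intro k l hkl
  by_contra hne
  wlog hlt : k < l generalizing k l
  · exact this hkl.symm (Ne.symm hne) (lt_of_le_of_ne (not_lt.1 hlt) (Ne.symm hne))
  refine hchar (l - k) (Nat.sub_pos_of_lt hlt) (by omega) ?_
  rw [Nat.cast_sub hlt.le, sub_eq_zero]
  exact hkl.symm

end Interpolation

section Selection

open scoped Classical in
/-- The set is built greedily, adding elements of `A` as long as each increases the truncated
covering number `∑ b, min t #{a ∈ S | r a b}` by more than `d`. -/
lemma exists_subset_card_filter_le {α β : Type*} (r : α → β → Prop) (A : Finset α) (B : Finset β)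
    (t d : ℕ) :
    ∃ S ⊆ A, d * #S ≤ t * #B ∧
      ∀ a ∈ A, a ∉ S → #{b ∈ B | r a b ∧ #{s ∈ S | r s b} < t} ≤ d := by
  let cover (S : Finset α) : ℕ := ∑ b ∈ B, min t #{s ∈ S | r s b}
  obtain ⟨S, hS, hmax⟩ := exists_max_image A.powerset (fun S => (cover S : ℤ) - d * #S)
    ⟨∅, empty_mem_powerset A⟩
  rw [mem_powerset] at hS
  refine ⟨S, hS, ?_, fun a ha haS => ?_⟩
  · have hempty := hmax ∅ (empty_mem_powerset A)
    have hcover : cover S ≤ t * #B := by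
      rw [mul_comm]
      exact sum_le_card_nsmul _ _ _ fun b _ => min_le_left _ _
    simp only [card_empty, Nat.cast_zero, mul_zero, sub_zero] at hempty
    zify at hcover ⊢
    have : (0 : ℤ) ≤ cover ∅ := Nat.cast_nonneg _
    linarith
  · have hinsert := hmax (insert a S) (mem_powerset.2 (insert_subset ha hS))
    have hcover : cover (insert a S) = cover S + #{b ∈ B | r a b ∧ #{s ∈ S | r s b} < t} := by
      rw [card_filter, ← sum_add_distrib]
      refine sum_congr rfl fun b _ => ?_
      rw [filter_insert]
      by_cases hab : r a b
      · rw [if_pos hab, card_insert_of_notMem fun h => haS (mem_filter.1 h).1]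
        split_ifs with hlt <;> grind
      · rw [if_neg hab, if_neg fun h => hab h.1, add_zero]
    rw [hcover, card_insert_of_notMem haS] at hinsert
    push_cast at hinsert
    have : (#{b ∈ B | r a b ∧ #{s ∈ S | r s b} < t} : ℤ) ≤ d := by linarith
    exact_mod_cast this

end Selection

section Incidences

open MvPolynomial
open scoped Classical

variable {F : Type*} [Field F]

/-- The number of incidences between the lines of `A`, in one family, and the lines of `B`, in the
other family. -/
noncomputable def incidences (A B : Finset (RulingLine F)) : ℕ :=
  ∑ a ∈ A, #{b ∈ B | a.Meets b}

lemma incidences_comm (A B : Finset (RulingLine F)) : incidences A B = incidences B A := by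
  simp only [incidences, card_filter]
  rw [sum_comm]
  exact sum_congr rfl fun b _ => sum_congr rfl fun a _ =>
    if_congr RulingLine.meets_comm rfl rfl

lemma incidences_filter_left_add (A B : Finset (RulingLine F)) (q : RulingLine F → Prop)
    [DecidablePred q] : incidences {a ∈ A | q a} B + incidences {a ∈ A | ¬q a} B = incidences A B :=
  sum_filter_add_sum_filter_not A q _

lemma incidences_filter_right_add (A B : Finset (RulingLine F)) (q : RulingLine F → Prop)
    [DecidablePred q] :
    incidences A {b ∈ B | q b} + incidences A {b ∈ B | ¬q b} = incidences A B := by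
  rw [incidences_comm A, incidences_comm A, incidences_comm A, incidences_filter_left_add]

lemma incidences_le_of_left {A B : Finset (RulingLine F)} {d : ℕ}
    (h : ∀ a ∈ A, #{b ∈ B | a.Meets b} ≤ d) : incidences A B ≤ d * #A :=
  (sum_le_card_nsmul A _ d h).trans_eq (mul_comm _ _)

lemma incidences_le_of_right {A B : Finset (RulingLine F)} {d : ℕ}
    (h : ∀ b ∈ B, #{a ∈ A | a.Meets b} ≤ d) : incidences A B ≤ d * #B := by
  rw [incidences_comm]
  exact incidences_le_of_left fun b hb =>
    (congrArg card (filter_congr fun _ _ => RulingLine.meets_comm)).trans_le (h b hb)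

lemma incidences_le_card_mul_card (A B : Finset (RulingLine F)) : incidences A B ≤ #A * #B :=
  (incidences_le_of_left fun _ _ => card_filter_le _ _).trans_eq (mul_comm _ _)

lemma card_meets_le_totalDegree {i j : Fin 2} (hij : i ≠ j) {Q : MvPolynomial (Fin 3) F}
    {b : RulingLine F} (hb : b.restrict j Q ≠ 0) {A : Finset (RulingLine F)}
    (hA : Set.InjOn RulingLine.base (A : Set (RulingLine F))) (hAQ : ∀ a ∈ A, a.restrict i Q = 0) :
    #{a ∈ A | a.Meets b} ≤ Q.totalDegree := by
  refine le_trans ?_ (b.natDegree_restrict_le j Q)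
  rw [← card_image_of_injOn (hA.mono (coe_subset.2 (filter_subset _ _)))]
  refine Polynomial.card_le_degree_of_subset_roots fun x hx => ?_
  obtain ⟨a, ha, rfl⟩ := mem_image.1 hx
  rw [mem_filter] at ha
  rw [Polynomial.mem_roots hb, Polynomial.IsRoot, ← ha.2.eval_restrict hij, hAQ a ha.1,
    Polynomial.eval_zero]

lemma incidences_le_totalDegree_mul {i j : Fin 2} (hij : i ≠ j) {Q : MvPolynomial (Fin 3) F}
    {A B : Finset (RulingLine F)} (hA : Set.InjOn RulingLine.base (A : Set (RulingLine F)))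
    (hAQ : ∀ a ∈ A, a.restrict i Q = 0) (hBQ : ∀ b ∈ B, b.restrict j Q ≠ 0) :
    incidences A B ≤ Q.totalDegree * #B :=
  incidences_le_of_right fun b hb => card_meets_le_totalDegree hij (hBQ b hb) hA hAQ

/-- The nondegeneracy of two families of lines that the incidence bound requires: no two lines of
one family lie in a common plane of its pencil, and every quadric contains at most `k` lines of one
of the families. -/
structure IsGeneric (k : ℕ) (A B : Finset (RulingLine F)) : Prop where
  injOn_left : Set.InjOn RulingLine.base (A : Set (RulingLine F))
  injOn_right : Set.InjOn RulingLine.base (B : Set (RulingLine F))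
  card_onQuadric_le : ∀ w β γ δ, #{a ∈ A | a.OnQuadric w β γ δ} ≤ k ∨
    #{b ∈ B | b.OnQuadric w γ β δ} ≤ k

namespace IsGeneric

variable {k : ℕ} {A B A' B' : Finset (RulingLine F)}

lemma symm (h : IsGeneric k A B) : IsGeneric k B A :=
  ⟨h.injOn_right, h.injOn_left, fun w β γ δ => (h.card_onQuadric_le w γ β δ).symm⟩

lemma mono (h : IsGeneric k A B) (hA : A' ⊆ A) (hB : B' ⊆ B) : IsGeneric k A' B' :=
  ⟨h.injOn_left.mono (coe_subset.2 hA), h.injOn_right.mono (coe_subset.2 hB), fun w β γ δ =>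
    (h.card_onQuadric_le w β γ δ).imp (card_le_card (filter_subset_filter _ hA)).trans
      (card_le_card (filter_subset_filter _ hB)).trans⟩

lemma filter (h : IsGeneric k A B) (q r : RulingLine F → Prop) [DecidablePred q]
    [DecidablePred r] : IsGeneric k {a ∈ A | q a} {b ∈ B | r b} :=
  h.mono (filter_subset _ _) (filter_subset _ _)

end IsGeneric

/-- The incidence bound for generic families of at most `n ^ 2` lines, the statement on which the
proof of the incidence theorem inducts. -/
def IncidenceBound (F : Type*) [Field F] (K k n : ℕ) : Prop :=
  ∀ A B : Finset (RulingLine F), IsGeneric k A B → #A ≤ n ^ 2 → #B ≤ n ^ 2 →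
    incidences A B ≤ K * (n ^ 3 + k * n ^ 2)

lemma incidences_le_of_not_dvd {i j : Fin 2} (hij : i ≠ j) {P Q : MvPolynomial (Fin 3) F}
    (hP : Irreducible P) (hZ : P.degreeOf 0 ≠ 0) (hPQ : ¬P ∣ Q)
    (hQ : Q.totalDegree ≤ 3 * P.totalDegree) {K k : ℕ} {A B : Finset (RulingLine F)}
    (hAB : IsGeneric k A B) (hAP : ∀ a ∈ A, a.restrict i P = 0)
    (hBP : ∀ b ∈ B, b.restrict j P = 0) (hAQ : ∀ a ∈ A, a.restrict i Q = 0)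
    (hK : IncidenceBound F K k (3 * P.totalDegree)) :
    incidences A B ≤ (3 * P.totalDegree + k) * (#A + #B) +
      K * ((3 * P.totalDegree) ^ 3 + k * (3 * P.totalDegree) ^ 2) := by
  set B₀ : Finset (RulingLine F) := {b ∈ B | b.restrict j Q = 0}
  set B₁ : Finset (RulingLine F) := {b ∈ B | b.restrict j Q ≠ 0}
  have hsplit : incidences A B₀ + incidences A B₁ = incidences A B :=
    incidences_filter_right_add A B _
  have hAB₀ : IsGeneric k A B₀ := hAB.mono subset_rfl (filter_subset _ _)
  have hAcard := card_le_of_restrict_eq_zero i hP hZ hPQ hAB.injOn_left hAP hAQ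
  have hB₀card := card_le_of_restrict_eq_zero j hP hZ hPQ hAB₀.injOn_right
    (fun b hb => hBP b (mem_filter.1 hb).1) (fun b hb => (mem_filter.1 hb).2)
  have hsq {c : ℕ} (hc : c ≤ 2 * P.totalDegree * Q.totalDegree) : c ≤ (3 * P.totalDegree) ^ 2 :=
    calc c ≤ 2 * P.totalDegree * (3 * P.totalDegree) := hc.trans (Nat.mul_le_mul_left _ hQ)
      _ ≤ (3 * P.totalDegree) ^ 2 := by nlinarith
  have hbound := hK A B₀ hAB₀ (hsq hAcard) (hsq hB₀card)
  have hfew : incidences A B₁ ≤ Q.totalDegree * #B₁ :=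
    incidences_le_totalDegree_mul hij hAB.injOn_left hAQ fun b hb => (mem_filter.1 hb).2
  have hB₁card : #B₁ ≤ #A + #B := (card_filter_le _ _).trans (Nat.le_add_left _ _)
  have := Nat.mul_le_mul (hQ.trans (Nat.le_add_right _ k)) hB₁card
  omega

lemma incidences_le_of_onQuadric {k : ℕ} {A B : Finset (RulingLine F)} (hAB : IsGeneric k A B)
    {w β γ δ : F} (hA : ∀ a ∈ A, a.OnQuadric w β γ δ) (hB : ∀ b ∈ B, b.OnQuadric w γ β δ) :
    incidences A B ≤ k * (#A + #B) := by
  have hk := hAB.card_onQuadric_le w β γ δ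
  rw [filter_true_of_mem hA, filter_true_of_mem hB] at hk
  refine (incidences_le_card_mul_card A B).trans ?_
  rcases hk with hk | hk <;> nlinarith

lemma exists_eval_restrict (i : Fin 2) (a : RulingLine F) (t : F) :
    ∃ v : Fin 3 → F, ∀ P : MvPolynomial (Fin 3) F, (a.restrict i P).eval t = eval v P := by
  refine ⟨fun k => (a.restrict i (X k)).eval t, fun P => ?_⟩
  have hcomp : (Polynomial.aeval t).comp (a.restrict i) =
      aeval fun k => (a.restrict i (X k)).eval t := algHom_ext fun k => by
    rw [aeval_X, AlgHom.comp_apply, Polynomial.coe_aeval_eq_eval]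
  have heval := DFunLike.congr_fun hcomp P
  rwa [AlgHom.comp_apply, Polynomial.coe_aeval_eq_eval, aeval_eq_eval] at heval

/-- Either the surface has a point at which the classification of doubly ruled surfaces applies, or
`∂P/∂x₀` vanishes on all the lines of `A`. -/
lemma incidences_le_of_dvd_flecnode {P : MvPolynomial (Fin 3) F} (hP : Irreducible P)
    (hZ : P.degreeOf 0 ≠ 0) (hdvd : ∀ i, P ∣ flecnode i P)
    (hchar : ∀ k : ℕ, 0 < k → k ≤ P.totalDegree → (k : F) ≠ 0) {K k : ℕ}
    {A B : Finset (RulingLine F)} (hAB : IsGeneric k A B) (hAP : ∀ a ∈ A, a.restrict 1 P = 0)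
    (hBP : ∀ b ∈ B, b.restrict 0 P = 0) (hK : IncidenceBound F K k (3 * P.totalDegree)) :
    incidences A B ≤ (3 * P.totalDegree + k) * (#A + #B) +
      K * ((3 * P.totalDegree) ^ 3 + k * (3 * P.totalDegree) ^ 2) := by
  have hdeg := totalDegree_pderiv_le 0 P
  have hpos : P.degreeOf 0 ≤ P.totalDegree := degreeOf_le_totalDegree P 0
  have hP' : ¬P ∣ pderiv 0 P := fun hdvd => by
    have := totalDegree_le_of_dvd_of_isDomain hdvd
      (pderiv_ne_zero hZ fun k hk hle => hchar k hk (hle.trans hpos))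
    omega
  by_cases hsingular : ∀ a ∈ A, a.restrict 1 (pderiv 0 P) = 0
  · exact incidences_le_of_not_dvd one_ne_zero hP hZ hP' (by omega) hAB hAP hBP hsingular hK
  push Not at hsingular
  obtain ⟨a, ha, hne⟩ := hsingular
  obtain ⟨t, ht⟩ := exists_eval_ne_zero hne fun k hk hle =>
    hchar k hk (hle.trans ((a.natDegree_restrict_le 1 _).trans (by omega)))
  obtain ⟨v, hv⟩ := exists_eval_restrict 1 a t
  have hPv : eval v P = 0 := by rw [← hv, hAP a ha, Polynomial.eval_zero]
  rw [hv] at ht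
  obtain ⟨w, β, γ, δ, hA, hB⟩ := RulingLine.exists_onQuadric hP hdvd hPv ht hchar
  refine (incidences_le_of_onQuadric hAB (fun a ha => hA a (hAP a ha)) fun b hb =>
    hB b (hBP b hb)).trans ((Nat.mul_le_mul_right _ ?_).trans (Nat.le_add_right _ _))
  exact Nat.le_add_left _ _

lemma incidences_le_of_irreducible {P : MvPolynomial (Fin 3) F} (hP : Irreducible P)
    (hchar : ∀ k : ℕ, 0 < k → k ≤ P.totalDegree → (k : F) ≠ 0) {K k : ℕ}
    {A B : Finset (RulingLine F)} (hAB : IsGeneric k A B) (hAP : ∀ a ∈ A, a.restrict 1 P = 0)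
    (hBP : ∀ b ∈ B, b.restrict 0 P = 0) (hK : IncidenceBound F K k (3 * P.totalDegree)) :
    incidences A B ≤ (3 * P.totalDegree + k) * (#A + #B) +
      K * ((3 * P.totalDegree) ^ 3 + k * (3 * P.totalDegree) ^ 2) := by
  rcases A.eq_empty_or_nonempty with rfl | ⟨a₀, ha₀⟩
  · simp [incidences]
  rcases B.eq_empty_or_nonempty with rfl | ⟨b₀, hb₀⟩
  · simp [incidences]
  have hZ : P.degreeOf 0 ≠ 0 :=
    degreeOf_zero_ne_zero_of_restrict_eq_zero one_ne_zero hP (hAP a₀ ha₀) (hBP b₀ hb₀)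
  have hbound {Q : MvPolynomial (Fin 3) F} (hPQ : ¬P ∣ Q) (hQ : Q.totalDegree ≤ 3 * P.totalDegree)
      (hAQ : ∀ a ∈ A, a.restrict 1 Q = 0) :=
    incidences_le_of_not_dvd one_ne_zero hP hZ hPQ hQ hAB hAP hBP hAQ hK
  by_cases h₁ : P ∣ flecnode 1 P
  swap
  · exact hbound h₁ (totalDegree_flecnode_le 1 P) fun a ha => restrict_flecnode_eq_zero (hAP a ha)
  by_cases h₀ : P ∣ flecnode 0 P
  swap
  · rw [incidences_comm, add_comm #A]
    exact incidences_le_of_not_dvd zero_ne_one hP hZ h₀ (totalDegree_flecnode_le 0 P) hAB.symm hBP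
      hAP (fun b hb => restrict_flecnode_eq_zero (hBP b hb)) hK
  by_cases h₁ : P ∣ flecnode 1 P
  swap
  · exact incidences_le_of_not_dvd one_ne_zero hP hZ h₁ (totalDegree_flecnode_le 1 P) hAB hAP hBP
      (fun a ha => restrict_flecnode_eq_zero (hAP a ha)) hK
  by_cases h₀ : P ∣ flecnode 0 P
  swap
  · rw [incidences_comm, add_comm #A]
    exact incidences_le_of_not_dvd zero_ne_one hP hZ h₀ (totalDegree_flecnode_le 0 P) hAB.symm hBP
      hAP (fun b hb => restrict_flecnode_eq_zero (hBP b hb)) hK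
  exact incidences_le_of_dvd_flecnode hP hZ (Fin.forall_fin_two.2 ⟨h₀, h₁⟩) hchar hAB hAP hBP hK

lemma incidences_le_add_totalDegree_mul {A B : Finset (RulingLine F)}
    (hA : Set.InjOn RulingLine.base (A : Set (RulingLine F)))
    (hB : Set.InjOn RulingLine.base (B : Set (RulingLine F))) (Q : MvPolynomial (Fin 3) F) :
    incidences A B ≤ incidences {a ∈ A | a.restrict 1 Q = 0} {b ∈ B | b.restrict 0 Q = 0} +
      incidences {a ∈ A | ¬a.restrict 1 Q = 0} {b ∈ B | ¬b.restrict 0 Q = 0} +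
      Q.totalDegree * (#{a ∈ A | ¬a.restrict 1 Q = 0} + #{b ∈ B | ¬b.restrict 0 Q = 0}) := by
  rw [← incidences_filter_left_add A B fun a => a.restrict 1 Q = 0,
    ← incidences_filter_right_add _ B fun b => b.restrict 0 Q = 0,
    ← incidences_filter_right_add {a ∈ A | ¬a.restrict 1 Q = 0} B fun b => b.restrict 0 Q = 0]
  have hAcross := incidences_le_totalDegree_mul one_ne_zero
    (A := {a ∈ A | a.restrict 1 Q = 0}) (B := {b ∈ B | ¬b.restrict 0 Q = 0})
    (hA.mono (coe_subset.2 (filter_subset _ _)))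
    (fun a ha => (mem_filter.1 ha).2) fun b hb => (mem_filter.1 hb).2
  have hBcross := incidences_le_totalDegree_mul zero_ne_one
    (A := {b ∈ B | b.restrict 0 Q = 0}) (B := {a ∈ A | ¬a.restrict 1 Q = 0})
    (hB.mono (coe_subset.2 (filter_subset _ _)))
    (fun b hb => (mem_filter.1 hb).2) fun a ha => (mem_filter.1 ha).2
  rw [incidences_comm] at hBcross
  linarith

lemma incidences_le_of_restrict_eq_zero {K k : ℕ} {P : MvPolynomial (Fin 3) F} (hP : P ≠ 0)
    (hchar : ∀ k : ℕ, 0 < k → k ≤ P.totalDegree → (k : F) ≠ 0)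
    (hK : ∀ n ≤ 3 * P.totalDegree, IncidenceBound F K k n) {A B : Finset (RulingLine F)}
    (hAB : IsGeneric k A B) (hAP : ∀ a ∈ A, a.restrict 1 P = 0)
    (hBP : ∀ b ∈ B, b.restrict 0 P = 0) :
    incidences A B ≤ (3 * P.totalDegree + k) * (#A + #B) +
      K * ((3 * P.totalDegree) ^ 3 + k * (3 * P.totalDegree) ^ 2) := by
  induction P using WfDvdMonoid.induction_on_irreducible generalizing A B with
  | zero => exact absurd rfl hP
  | unit u hu =>
    have hA : A = ∅ := eq_empty_of_forall_notMem fun a ha =>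
      (hu.map (a.restrict 1)).ne_zero (hAP a ha)
    simp [hA, incidences]
  | mul Q π hQ hπ ih =>
    rw [totalDegree_mul_of_isDomain hπ.ne_zero hQ] at hchar hK ⊢
    have hsplit := incidences_le_add_totalDegree_mul hAB.injOn_left hAB.injOn_right π
    have hbound_π := incidences_le_of_irreducible hπ (fun k hk hle => hchar k hk (by omega))
      (hAB.filter (fun a => a.restrict 1 π = 0) fun b => b.restrict 0 π = 0)
      (fun a ha => (mem_filter.1 ha).2) (fun b hb => (mem_filter.1 hb).2) (hK _ (by omega))
    have hrest {i : Fin 2} {a : RulingLine F} (h : a.restrict i (π * Q) = 0)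
        (hπ : a.restrict i π ≠ 0) : a.restrict i Q = 0 :=
      (mul_eq_zero.1 ((map_mul _ _ _).symm.trans h)).resolve_left hπ
    have hbound_Q := ih hQ (fun k hk hle => hchar k hk (by omega)) (fun n hn => hK n (by omega))
      (hAB.filter (fun a => ¬a.restrict 1 π = 0) fun b => ¬b.restrict 0 π = 0)
      (fun a ha => hrest (hAP a (mem_filter.1 ha).1) (mem_filter.1 ha).2)
      (fun b hb => hrest (hBP b (mem_filter.1 hb).1) (mem_filter.1 hb).2)
    rw [← card_filter_add_card_filter_not (s := A) fun a => a.restrict 1 π = 0,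
      ← card_filter_add_card_filter_not (s := B) fun b => b.restrict 0 π = 0]
    set d := π.totalDegree
    set e := Q.totalDegree
    have hsuper : K * ((3 * d) ^ 3 + k * (3 * d) ^ 2) + K * ((3 * e) ^ 3 + k * (3 * e) ^ 2) ≤
        K * ((3 * (d + e)) ^ 3 + k * (3 * (d + e)) ^ 2) := by
      rw [← mul_add]
      refine Nat.mul_le_mul_left K ?_
      have hcube : 0 ≤ 81 * (d ^ 2 * e + d * e ^ 2) + 18 * (k * d * e) := Nat.zero_le _
      linarith
    set a₀ := #{a ∈ A | a.restrict 1 π = 0}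
    set a₁ := #{a ∈ A | ¬a.restrict 1 π = 0}
    set b₀ := #{b ∈ B | b.restrict 0 π = 0}
    set b₁ := #{b ∈ B | ¬b.restrict 0 π = 0}
    have hcross : 0 ≤ e * (3 * (a₀ + b₀)) + d * (2 * (a₁ + b₁)) := Nat.zero_le _
    linarith

lemma exists_surface {A B : Finset (RulingLine F)}
    (hA : Set.InjOn RulingLine.base (A : Set (RulingLine F))) {m d : ℕ} (hB : 9 * #B < d * m) :
    ∃ P : MvPolynomial (Fin 3) F, P ≠ 0 ∧ P.totalDegree < 3 * m ∧
      incidences {a ∈ A | ¬a.restrict 1 P = 0} {b ∈ B | ¬b.restrict 0 P = 0} ≤ d * #A := by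
  obtain ⟨S, hSA, hS, hSd⟩ := exists_subset_card_filter_le RulingLine.Meets A B (3 * m) d
  have hScard : #S * (3 * m) < m ^ 3 := by
    have hm : 0 < m := Nat.pos_of_mul_pos_left (pos_of_gt hB)
    have : d * (#S * (3 * m)) < d * m ^ 3 := by
      calc d * (#S * (3 * m)) = d * #S * (3 * m) := by ring
        _ ≤ 3 * m * #B * (3 * m) := Nat.mul_le_mul_right _ hS
        _ = 9 * #B * m ^ 2 := by ring
        _ < d * m * m ^ 2 := Nat.mul_lt_mul_of_pos_right hB (pow_pos hm 2)
        _ = d * m ^ 3 := by ring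
    exact lt_of_mul_lt_mul_left this (Nat.zero_le d)
  obtain ⟨P, hP, hPdeg, hPS⟩ := exists_restrict_eq_zero_of_card_lt 1 hScard
  refine ⟨P, hP, hPdeg, (incidences_le_of_left (d := d) fun a ha => ?_).trans
    (Nat.mul_le_mul_left d (card_filter_le _ _))⟩
  rw [mem_filter] at ha
  refine (card_le_card fun b hb => ?_).trans (hSd a ha.1 fun haS => ha.2 (hPS a haS))
  rw [mem_filter, mem_filter] at hb
  exact mem_filter.2 ⟨hb.1.1, hb.2, (card_meets_le_totalDegree one_ne_zero hb.1.2
    (hA.mono (coe_subset.2 hSA)) hPS).trans_lt hPdeg⟩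

lemma incidenceBound_of_le {K n : ℕ} (k : ℕ) (hn : n ≤ K) : IncidenceBound F K k n :=
  fun A B _ hA hB => calc
    incidences A B ≤ n ^ 2 * n ^ 2 :=
      (incidences_le_card_mul_card A B).trans (Nat.mul_le_mul hA hB)
    _ = n * n ^ 3 := by ring
    _ ≤ K * n ^ 3 := Nat.mul_le_mul_right _ hn
    _ ≤ K * (n ^ 3 + k * n ^ 2) := Nat.mul_le_mul_left _ (Nat.le_add_right _ _)

/-- The bound of Guth and Katz for the incidences between two families of lines, obtained by the
polynomial method: a surface of degree much smaller than `n` accounts for most incidences, and to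
those on the surface the induction hypothesis applies. -/
theorem incidenceBound (k n : ℕ) (hchar : ∀ j : ℕ, 0 < j → j < n → (j : F) ≠ 0) :
    IncidenceBound F 1000 k n := by
  induction n using Nat.strong_induction_on with
  | _ n ih =>
  intro A B hAB hA hB
  rcases lt_or_ge n 36 with hn | hn
  · exact incidenceBound_of_le k (by omega) A B hAB hA hB
  obtain ⟨P, hP, hPdeg, hoff⟩ := exists_surface hAB.injOn_left (B := B) (m := n / 36)
    (d := 648 * n + 1) (by
      have : n < 72 * (n / 36) := by omega
      nlinarith)
  have hon := incidences_le_of_restrict_eq_zero hP (fun j hj hle => hchar j hj (by omega))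
    (fun l hl => ih l (by omega) fun j hj hlt => hchar j hj (by omega))
    (hAB.filter (fun a => a.restrict 1 P = 0) fun b => b.restrict 0 P = 0)
    (fun a ha => (mem_filter.1 ha).2) fun b hb => (mem_filter.1 hb).2
  have hsplit := incidences_le_add_totalDegree_mul hAB.injOn_left hAB.injOn_right P
  have hAcard := card_filter_add_card_filter_not (s := A) fun a => a.restrict 1 P = 0
  have hBcard := card_filter_add_card_filter_not (s := B) fun b => b.restrict 0 P = 0
  set d := 3 * P.totalDegree with hd
  have hd4 : 4 * d ≤ n := by omega
  have hsum : incidences A B ≤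
      (d + k) * (#A + #B) + 1000 * (d ^ 3 + k * d ^ 2) + (648 * n + 1) * #A := by
    have hcross : 0 ≤ (2 * P.totalDegree + k) * (#{a ∈ A | ¬a.restrict 1 P = 0} +
      #{b ∈ B | ¬b.restrict 0 P = 0}) := Nat.zero_le _
    rw [← hBcard]
    nlinarith
  have hd2 : 16 * d ^ 2 ≤ n ^ 2 := by nlinarith
  have hd3 : 64 * d ^ 3 ≤ n ^ 3 := by
    convert Nat.pow_le_pow_left hd4 3 using 1
    ring
  calc incidences A B
      ≤ (d + k) * (n ^ 2 + n ^ 2) + 1000 * (d ^ 3 + k * d ^ 2) + (648 * n + 1) * n ^ 2 := by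
        refine hsum.trans ?_
        gcongr
    _ ≤ 1000 * (n ^ 3 + k * n ^ 2) := by
        have hdn : 4 * (d * n ^ 2) ≤ n ^ 3 := by nlinarith
        have hn2 : n ^ 2 ≤ n ^ 3 := Nat.pow_le_pow_right (by omega) (by decide)
        have hkd : k * (16 * d ^ 2) ≤ k * n ^ 2 := Nat.mul_le_mul_left k hd2
        nlinarith

end Incidences

section GenericPosition

variable {k F : Type*} [Field k] [Field F] [Algebra k F] {θ : F}

lemma eq_zero_of_transcendental (hθ : Transcendental k θ) {c₀ c₁ c₂ c₄ : k}
    (h : algebraMap k F c₀ + θ * algebraMap k F c₁ + θ ^ 2 * algebraMap k F c₂ +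
      θ ^ 4 * algebraMap k F c₄ = 0) : c₀ = 0 ∧ c₁ = 0 ∧ c₂ = 0 := by
  open Polynomial in
  have hP : C c₀ + X * C c₁ + X ^ 2 * C c₂ + X ^ 4 * C c₄ = 0 :=
    transcendental_iff.1 hθ _ (by
      simpa only [map_add, map_mul, map_pow, aeval_X, aeval_C] using h)
  have hcoeff (i : ℕ) := congrArg (Polynomial.coeff · i) hP
  exact ⟨by simpa [Polynomial.coeff_C, Polynomial.coeff_X] using hcoeff 0,
    by simpa [Polynomial.coeff_C, Polynomial.coeff_X] using hcoeff 1,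
    by simpa [Polynomial.coeff_C, Polynomial.coeff_X] using hcoeff 2⟩

namespace RulingLine

/-- The line of 3-space attached to the point `u.1` and the planar line of slope `u.2.1` and
intercept `u.2.2`. For `θ = 0` it has these three numbers as coordinates; the projective change of
coordinates with parameter `θ` puts the lines in general position. -/
def ofPointLine (θ : F) (u : k × k × k) : RulingLine F where
  base := (algebraMap k F u.1 + θ * algebraMap k F u.2.1 + θ ^ 2 * algebraMap k F u.2.2) /
    (1 + θ ^ 2 * algebraMap k F u.2.1)
  slope := algebraMap k F u.2.1 / (1 + θ ^ 2 * algebraMap k F u.2.1)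
  intercept := algebraMap k F u.2.2 / (1 + θ ^ 2 * algebraMap k F u.2.1)

lemma one_add_sq_mul_ne_zero (hθ : Transcendental k θ) (s : k) :
    1 + θ ^ 2 * algebraMap k F s ≠ 0 := fun h =>
  one_ne_zero (eq_zero_of_transcendental hθ (c₀ := (1 : k)) (c₁ := 0) (c₂ := s) (c₄ := 0)
    (by simpa only [map_one, map_zero, mul_zero, add_zero] using h)).1

lemma base_ofPointLine_injective (hθ : Transcendental k θ) :
    Function.Injective fun u : k × k × k => (ofPointLine θ u).base := by
  rintro ⟨x, s, t⟩ ⟨x', s', t'⟩ h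
  simp only [ofPointLine] at h
  rw [div_eq_div_iff (one_add_sq_mul_ne_zero hθ s) (one_add_sq_mul_ne_zero hθ s')] at h
  obtain ⟨hx, hs, ht⟩ := eq_zero_of_transcendental hθ (c₀ := x - x') (c₁ := s - s')
    (c₂ := t - t' + x * s' - x' * s) (c₄ := t * s' - t' * s) (by
      simp only [map_sub, map_add, map_mul]
      linear_combination h)
  obtain rfl := sub_eq_zero.1 hx
  obtain rfl := sub_eq_zero.1 hs
  obtain rfl : t = t' := by linear_combination ht
  rfl

lemma ofPointLine_injective (hθ : Transcendental k θ) :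
    Function.Injective (ofPointLine θ : k × k × k → RulingLine F) := fun _ _ h =>
  base_ofPointLine_injective hθ (congrArg base h)

lemma meets_ofPointLine_iff (hθ : Transcendental k θ) (u v : k × k × k) :
    (ofPointLine θ u).Meets (ofPointLine θ v) ↔
      v.2.1 * u.1 + v.2.2 = u.2.1 * v.1 + u.2.2 := by
  have hu := one_add_sq_mul_ne_zero hθ u.2.1
  have hv := one_add_sq_mul_ne_zero hθ v.2.1
  rw [← (algebraMap k F).injective.eq_iff]
  simp only [map_add, map_mul, Meets, ofPointLine]
  field_simp
  constructor <;> intro h <;> linear_combination h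

lemma slope_mul_ofPointLine (hθ : Transcendental k θ) (u : k × k × k) :
    (ofPointLine θ u).slope * (1 + θ ^ 2 * algebraMap k F u.2.1) = algebraMap k F u.2.1 :=
  div_mul_cancel₀ _ (one_add_sq_mul_ne_zero hθ u.2.1)

lemma point_mul_ofPointLine (hθ : Transcendental k θ) (u : k × k × k) :
    algebraMap k F u.1 * (1 - θ ^ 2 * (ofPointLine θ u).slope) = (ofPointLine θ u).base -
      θ * (ofPointLine θ u).slope - θ ^ 2 * (ofPointLine θ u).intercept := by
  have := one_add_sq_mul_ne_zero hθ u.2.1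
  simp only [ofPointLine]
  field_simp
  ring

lemma OnQuadric.eq_zero_of_slope_eq (hθ : Transcendental k θ) {w β γ δ : F} {u v : k × k × k}
    (hu : (ofPointLine θ u).OnQuadric w β γ δ) (hv : (ofPointLine θ v).OnQuadric w β γ δ)
    (huv : u ≠ v) (hs : u.2.1 = v.2.1) : w = 0 := by
  have hu' := slope_mul_ofPointLine hθ u
  have hv' := slope_mul_ofPointLine hθ v
  rw [← hs, hv.1] at hv'
  rw [hu.1] at hu'
  have h : ((ofPointLine θ u).base - (ofPointLine θ v).base) *
      (1 + θ ^ 2 * algebraMap k F u.2.1) * w = 0 := by linear_combination hu' - hv'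
  exact (mul_eq_zero.1 h).resolve_left (mul_ne_zero
    (sub_ne_zero.2 ((base_ofPointLine_injective hθ).ne huv)) (one_add_sq_mul_ne_zero hθ _))

lemma OnQuadric.sq_mul_eq_one_of_point_eq (hθ : Transcendental k θ) {β γ δ : F} {u v : k × k × k}
    (hu : (ofPointLine θ u).OnQuadric 0 β γ δ) (hv : (ofPointLine θ v).OnQuadric 0 β γ δ)
    (huv : u ≠ v) (hx : u.1 = v.1) : θ ^ 2 * β = 1 := by
  have hu' := point_mul_ofPointLine hθ u
  have hv' := point_mul_ofPointLine hθ v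
  rw [hu.1, hu.2] at hu'
  rw [← hx, hv.1, hv.2] at hv'
  have h : ((ofPointLine θ u).base - (ofPointLine θ v).base) * (1 - θ ^ 2 * β) = 0 := by
    linear_combination hv' - hu'
  exact (sub_eq_zero.1 ((mul_eq_zero.1 h).resolve_left
    (sub_ne_zero.2 ((base_ofPointLine_injective hθ).ne huv)))).symm

lemma not_onQuadric_of_sq_mul_eq_one (hθ : Transcendental k θ) {β γ δ : F} (hβ : θ ^ 2 * β = 1)
    (u : k × k × k) : ¬(ofPointLine θ u).OnQuadric 0 γ β δ := fun hu => by
  have hs := slope_mul_ofPointLine hθ u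
  rw [hu.1, zero_mul, zero_add] at hs
  refine one_ne_zero (α := F) ?_
  linear_combination θ ^ 2 * hs - (1 + θ ^ 2 * algebraMap k F u.2.1) * hβ

end RulingLine

open scoped Classical in
lemma isGeneric_image_ofPointLine [DecidableEq k] (hθ : Transcendental k θ) {X : Finset k}
    {L : Finset (k × k)} {M : ℕ} (hX : #X ≤ M) (hL : #(L.image Prod.fst) ≤ M) :
    IsGeneric M ((X ×ˢ L).image (RulingLine.ofPointLine θ))
      ((X ×ˢ L).image (RulingLine.ofPointLine θ)) := by
  have hinj : Set.InjOn RulingLine.base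
      ((X ×ˢ L).image (RulingLine.ofPointLine θ) : Set (RulingLine F)) := by
    rw [coe_image]
    rintro _ ⟨u, _, rfl⟩ _ ⟨v, _, rfl⟩ h
    rw [RulingLine.base_ofPointLine_injective hθ h]
  refine ⟨hinj, hinj, fun w β γ δ => ?_⟩
  by_contra! h
  simp only [filter_image, card_image_of_injective _ (RulingLine.ofPointLine_injective hθ)] at h
  obtain ⟨u, hu, v, hv, huv, hs⟩ := exists_ne_map_eq_of_card_lt_of_maps_to (hL.trans_lt h.1)
    (f := fun u => u.2.1) fun u hu =>
      mem_image_of_mem _ (mem_product.1 (mem_filter.1 hu).1).2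
  obtain ⟨u', hu', v', hv', huv', hx⟩ := exists_ne_map_eq_of_card_lt_of_maps_to (hX.trans_lt h.1)
    (f := Prod.fst) fun u hu => (mem_product.1 (mem_filter.1 hu).1).1
  obtain rfl := (mem_filter.1 hu).2.eq_zero_of_slope_eq hθ (mem_filter.1 hv).2 huv hs
  have hβ := (mem_filter.1 hu').2.sq_mul_eq_one_of_point_eq hθ (mem_filter.1 hv').2 huv' hx
  obtain ⟨y, hy⟩ := card_pos.1 (pos_of_gt h.2)
  exact RulingLine.not_onQuadric_of_sq_mul_eq_one hθ hβ y (mem_filter.1 hy).2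

end GenericPosition

section LineEnergy

variable {k : Type*} [Field k] [DecidableEq k]

/-- The number of coincidences between the values at the points of `X` of the affine maps
`x ↦ l.1 * x + l.2` with `l ∈ L`. -/
def lineEnergy (X : Finset k) (L : Finset (k × k)) : ℕ :=
  #{q ∈ (X ×ˢ L) ×ˢ (X ×ˢ L) | q.1.2.1 * q.1.1 + q.1.2.2 = q.2.2.1 * q.2.1 + q.2.2.2}

open scoped Classical in
/-- Exchanging the two planar lines in a coincidence turns it into an incidence in 3-space. -/
lemma lineEnergy_le_incidences {F : Type*} [Field F] [Algebra k F] {θ : F}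
    (hθ : Transcendental k θ) (X : Finset k) (L : Finset (k × k)) :
    lineEnergy X L ≤ incidences ((X ×ˢ L).image (RulingLine.ofPointLine θ))
      ((X ×ˢ L).image (RulingLine.ofPointLine θ)) := by
  rw [incidences, ← card_sigma, lineEnergy]
  refine card_le_card_of_injOn (fun q => ⟨RulingLine.ofPointLine θ (q.1.1, q.2.2),
    RulingLine.ofPointLine θ (q.2.1, q.1.2)⟩) (fun q hq => ?_) fun q _ q' _ h => ?_
  · rw [mem_coe, mem_filter, mem_product, mem_product, mem_product] at hq
    refine mem_sigma.2 ⟨mem_image_of_mem _ (mem_product.2 ⟨hq.1.1.1, hq.1.2.2⟩), mem_filter.2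
      ⟨mem_image_of_mem _ (mem_product.2 ⟨hq.1.2.1, hq.1.1.2⟩), ?_⟩⟩
    exact (RulingLine.meets_ofPointLine_iff hθ _ _).2 hq.2
  · rw [Sigma.mk.injEq, heq_eq_eq] at h
    have h₁ := Prod.mk.inj (RulingLine.ofPointLine_injective hθ h.1)
    have h₂ := Prod.mk.inj (RulingLine.ofPointLine_injective hθ h.2)
    exact Prod.ext (Prod.ext h₁.1 h₂.2) (Prod.ext h₂.1 h₁.2)

theorem lineEnergy_le (p : ℕ) [CharP k p] {X : Finset k} {L : Finset (k × k)} {M n : ℕ}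
    (hX : #X ≤ M) (hL : #(L.image Prod.fst) ≤ M) (hn : p ≠ 0 → n ≤ p) (hN : #X * #L ≤ n ^ 2) :
    lineEnergy X L ≤ 1000 * (n ^ 3 + M * n ^ 2) := by
  classical
  have hθ := RatFunc.transcendental_X (K := k)
  have hcard : #((X ×ˢ L).image (RulingLine.ofPointLine (RatFunc.X : RatFunc k))) ≤ n ^ 2 :=
    card_image_le.trans (by rwa [card_product])
  have : CharP (RatFunc k) p := charP_of_injective_algebraMap (algebraMap k _).injective p
  have hchar (j : ℕ) (hj : 0 < j) (hjn : j < n) : (j : RatFunc k) ≠ 0 := fun h => by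
    have hdvd := (CharP.cast_eq_zero_iff (RatFunc k) p j).1 h
    have hp : p ≠ 0 := fun hp => hj.ne' (zero_dvd_iff.1 (hp ▸ hdvd))
    exact (hjn.trans_le (hn hp)).not_ge (Nat.le_of_dvd hj hdvd)
  exact (lineEnergy_le_incidences hθ X L).trans (incidenceBound M n hchar _ _
    (isGeneric_image_ofPointLine hθ hX hL) hcard hcard)

/-- Cauchy–Schwarz over the values of the affine maps. -/
lemma sq_mul_card_le_lineEnergy {X Y : Finset k} {L : Finset (k × k)} {t : ℕ}
    (ht : ∀ l ∈ L, t ≤ #{x ∈ X | l.1 * x + l.2 ∈ Y}) :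
    (t * #L) ^ 2 ≤ #Y * lineEnergy X L := by
  let value (u : k × k × k) : k := u.2.1 * u.1 + u.2.2
  have hsum : t * #L ≤ ∑ y ∈ Y, #{u ∈ X ×ˢ L | value u = y} := by
    rw [sum_card_fiberwise_eq_card_filter, card_filter, sum_product_right, mul_comm]
    refine card_nsmul_le_sum _ _ t fun l hl => ?_
    rw [← card_filter]
    exact ht l hl
  have hsq : ∑ y ∈ Y, #{u ∈ X ×ˢ L | value u = y} ^ 2 ≤ lineEnergy X L := by
    refine le_trans ?_ (card_filter_le {q ∈ (X ×ˢ L) ×ˢ (X ×ˢ L) | value q.1 = value q.2}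
      fun q => value q.1 ∈ Y)
    rw [← sum_card_fiberwise_eq_card_filter]
    refine sum_le_sum fun y _ => ?_
    rw [sq, ← card_product]
    refine card_le_card fun q hq => ?_
    rw [mem_product, mem_filter, mem_filter] at hq
    exact mem_filter.2 ⟨mem_filter.2
      ⟨mem_product.2 ⟨hq.1.1, hq.2.1⟩, hq.1.2.trans hq.2.2.symm⟩, hq.1.2⟩
  calc (t * #L) ^ 2 ≤ (∑ y ∈ Y, #{u ∈ X ×ˢ L | value u = y}) ^ 2 := Nat.pow_le_pow_left hsum 2
    _ ≤ #Y * ∑ y ∈ Y, #{u ∈ X ×ˢ L | value u = y} ^ 2 := sq_sum_le_card_mul_sum_sq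
    _ ≤ #Y * lineEnergy X L := Nat.mul_le_mul_left _ hsq

end LineEnergy

section RichLines

lemma exists_sq_between (N : ℕ) :
    ∃ n : ℕ, N ≤ n ^ 2 ∧ n ^ 2 ≤ 2 * N ∧ ∀ p : ℕ, N ≤ p ^ 2 → n ≤ p := by
  have hex : ∃ n : ℕ, N ≤ n ^ 2 := ⟨N, Nat.le_self_pow two_ne_zero N⟩
  refine ⟨Nat.find hex, Nat.find_spec hex, ?_, fun p hp => Nat.find_min' hex hp⟩
  rcases hn : Nat.find hex with - | n
  · simp
  have : n ^ 2 < N := not_le.1 (Nat.find_min hex (hn ▸ n.lt_succ_self))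
  zify at this ⊢
  nlinarith [sq_nonneg ((n : ℤ) - 1)]

lemma pow_four_mul_le_of_sq_mul_le {x y l n t : ℕ} (hl : 0 < l) (htx : t ≤ x) (hty : t ≤ y)
    (hn : n ^ 2 ≤ 2 * (x * l)) (h : (t * l) ^ 2 ≤ y * (1000 * (n ^ 3 + max x y * n ^ 2))) :
    t ^ 4 * l ≤ 32000000 * (x ^ 3 * y ^ 2) := by
  rcases le_total (max x y) n with hmax | hmax
  · have hsq : (t * l) ^ 2 ≤ 2000 * (y * n ^ 3) := calc
      (t * l) ^ 2 ≤ y * (1000 * (n ^ 3 + n * n ^ 2)) := h.trans (by gcongr)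
      _ = 2000 * (y * n ^ 3) := by ring
    refine Nat.le_of_mul_le_mul_right (c := l ^ 3) ?_ (pow_pos hl 3)
    calc t ^ 4 * l * l ^ 3 = ((t * l) ^ 2) ^ 2 := by ring
      _ ≤ (2000 * (y * n ^ 3)) ^ 2 := Nat.pow_le_pow_left hsq 2
      _ = 4000000 * y ^ 2 * (n ^ 2) ^ 3 := by ring
      _ ≤ 4000000 * y ^ 2 * (2 * (x * l)) ^ 3 := by gcongr
      _ = 32000000 * (x ^ 3 * y ^ 2) * l ^ 3 := by ring
  · have hsq : t ^ 2 * l ≤ 4000 * (y * max x y * x) := by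
      refine Nat.le_of_mul_le_mul_right (c := l) ?_ hl
      calc t ^ 2 * l * l = (t * l) ^ 2 := by ring
        _ ≤ y * (1000 * (n * n ^ 2 + max x y * n ^ 2)) := h.trans_eq (by ring)
        _ ≤ y * (1000 * (max x y * n ^ 2 + max x y * n ^ 2)) := by gcongr
        _ = 2000 * (y * max x y) * n ^ 2 := by ring
        _ ≤ 2000 * (y * max x y) * (2 * (x * l)) := by gcongr
        _ = 4000 * (y * max x y * x) * l := by ring
    have htmax : t ^ 2 * max x y ≤ x ^ 2 * y := by
      rcases le_total x y with hxy | hxy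
      · rw [max_eq_right hxy]
        gcongr
      · rw [max_eq_left hxy]
        calc t ^ 2 * x = t * t * x := by ring
          _ ≤ x * y * x := by gcongr
          _ = x ^ 2 * y := by ring
    calc t ^ 4 * l = t ^ 2 * (t ^ 2 * l) := by ring
      _ ≤ t ^ 2 * (4000 * (y * max x y * x)) := by gcongr
      _ = 4000 * (y * x) * (t ^ 2 * max x y) := by ring
      _ ≤ 4000 * (y * x) * (x ^ 2 * y) := by gcongr
      _ = 4000 * (x ^ 3 * y ^ 2) := by ring
      _ ≤ 32000000 * (x ^ 3 * y ^ 2) := by gcongr; norm_num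

variable {F : Type*} [Field F] [DecidableEq F] {X Y : Finset F} {L : Finset (F × F)} {t : ℕ}

theorem pow_four_mul_card_rich_le (p : ℕ) [CharP F p]
    (ht : ∀ l ∈ L, t ≤ #{x ∈ X | l.1 * x + l.2 ∈ Y}) (htX : t ≤ #X) (htY : t ≤ #Y)
    (hslope : #(L.image Prod.fst) ≤ max #X #Y) (hp : p ≠ 0 → #X * #L ≤ p ^ 2) :
    t ^ 4 * #L ≤ 32000000 * (#X ^ 3 * #Y ^ 2) := by
  rcases L.eq_empty_or_nonempty with rfl | hL
  · simp
  obtain ⟨n, hNn, hnN, hnp⟩ := exists_sq_between (#X * #L)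
  exact pow_four_mul_le_of_sq_mul_le hL.card_pos htX htY hnN <|
    (sq_mul_card_le_lineEnergy ht).trans <| Nat.mul_le_mul_left _ <|
      lineEnergy_le p (le_max_left _ _) hslope (fun h => hnp p (hp h)) hNn

theorem pow_four_mul_card_rich_le_of_slope_ne_zero (p : ℕ) [CharP F p]
    (ht : ∀ l ∈ L, t ≤ #{x ∈ X | l.1 * x + l.2 ∈ Y}) (htX : t ≤ #X) (htY : t ≤ #Y)
    (hslope : #(L.image Prod.fst) ≤ max #X #Y) (hL : ∀ l ∈ L, l.1 ≠ 0)
    (hp : p ≠ 0 → #Y * #L ≤ p ^ 2) :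
    t ^ 4 * #L ≤ 32000000 * (#Y ^ 3 * #X ^ 2) := by
  let inverse (l : F × F) : F × F := (l.1⁻¹, -(l.1⁻¹ * l.2))
  have hinj : Set.InjOn inverse (L : Set (F × F)) := fun l hl l' _ h => by
    obtain ⟨h₁, h₂⟩ := Prod.mk.inj h
    rw [inv_inj] at h₁
    rw [h₁, neg_inj] at h₂
    exact Prod.ext h₁ (mul_left_cancel₀ (inv_ne_zero (h₁ ▸ hL l hl)) h₂)
  have hcard := card_image_of_injOn hinj
  have hslopes : (L.image inverse).image Prod.fst = (L.image Prod.fst).image (·⁻¹) := by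
    rw [image_image, image_image]
    rfl
  rw [← hcard] at hp ⊢
  refine pow_four_mul_card_rich_le p ?_ htY htX ?_ hp
  · rw [forall_mem_image]
    refine fun l hl => (ht l hl).trans (card_le_card_of_injOn (fun x => l.1 * x + l.2)
      (fun x hx => ?_) fun x _ x' _ h => mul_left_cancel₀ (hL l hl) (add_right_cancel h))
    rw [mem_coe, mem_filter] at hx ⊢
    refine ⟨hx.2, ?_⟩
    rw [mul_add, inv_mul_cancel_left₀ (hL l hl), add_neg_cancel_right]
    exact hx.1
  · rw [hslopes, max_comm]
    exact card_image_le.trans hslope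

end RichLines

section LevelSets

variable {ι : Type*} {r : ι → ℕ} {a : ℕ}

lemma mul_sum_pow_four_le_of_lt_two_mul {S : Finset ι} {V : ℕ}
    (hS : ∀ x ∈ S, ∀ y ∈ S, r x < 2 * r y)
    (hlevel : ∀ t, t ^ 4 * #{x ∈ S | t ≤ r x} * a ≤ V) :
    a * ∑ x ∈ S, r x ^ 4 ≤ 16 * V := by
  rcases S.eq_empty_or_nonempty with rfl | hne
  · simp
  obtain ⟨y, hy, hmin⟩ := exists_min_image S r hne
  have hcount := hlevel (r y)
  rw [filter_true_of_mem hmin] at hcount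
  calc a * ∑ x ∈ S, r x ^ 4 ≤ a * (#S • (2 * r y) ^ 4) := Nat.mul_le_mul_left _ <|
        sum_le_card_nsmul _ _ _ fun x hx => Nat.pow_le_pow_left (hS x hx y hy).le 4
    _ = 16 * (r y ^ 4 * #S * a) := by rw [smul_eq_mul]; ring
    _ ≤ 16 * V := Nat.mul_le_mul_left _ hcount

lemma mul_sum_pow_four_le_of_mul_pow_three_le {S : Finset ι} {M W : ℕ} (hM : 0 < M)
    (hsum : ∑ x ∈ S, r x ≤ M) (hlow : ∀ x ∈ S, a * r x ^ 3 * M ≤ W) :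
    a * ∑ x ∈ S, r x ^ 4 ≤ W := by
  refine Nat.le_of_mul_le_mul_left (c := M) ?_ hM
  calc M * (a * ∑ x ∈ S, r x ^ 4) = ∑ x ∈ S, r x * (a * r x ^ 3 * M) := by
        rw [mul_sum, mul_sum]
        exact sum_congr rfl fun x _ => by ring
    _ ≤ ∑ x ∈ S, r x * W := sum_le_sum fun x hx => Nat.mul_le_mul_left _ (hlow x hx)
    _ = (∑ x ∈ S, r x) * W := (sum_mul _ _ _).symm
    _ ≤ M * W := Nat.mul_le_mul_right _ hsum

lemma lt_two_mul_of_log_eq {M W u v : ℕ} (hW : 0 < W) (hv : W ≤ a * v ^ 3 * M)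
    (h : Nat.log 8 (a * u ^ 3 * M / W) = Nat.log 8 (a * v ^ 3 * M / W)) : u < 2 * v := by
  have hlower := Nat.pow_log_le_self 8 (Nat.div_pos hv hW).ne'
  have hupper := Nat.lt_pow_succ_log_self (b := 8) (by decide) (a * u ^ 3 * M / W)
  rw [Nat.le_div_iff_mul_le hW] at hlower
  rw [h, Nat.div_lt_iff_lt_mul hW] at hupper
  refine lt_of_pow_lt_pow_left₀ 3 (Nat.zero_le _)
    (lt_of_mul_lt_mul_right (a := a * M) ?_ (Nat.zero_le _))
  calc u ^ 3 * (a * M) = a * u ^ 3 * M := by ring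
    _ < 8 ^ (Nat.log 8 (a * v ^ 3 * M / W) + 1) * W := hupper
    _ = 8 * (8 ^ Nat.log 8 (a * v ^ 3 * M / W) * W) := by ring
    _ ≤ 8 * (a * v ^ 3 * M) := Nat.mul_le_mul_left 8 hlower
    _ = (2 * v) ^ 3 * (a * M) := by ring

/-- Dyadic decomposition; a bound for `r` from above and below leaves only `log a` scales. -/
lemma mul_sum_pow_four_le {s : Finset ι} {M W K : ℕ} (hM : 0 < M) (hW : 0 < W)
    (hsum : ∑ x ∈ s, r x ≤ M) (hcube : ∀ x ∈ s, r x ^ 3 * M ≤ W)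
    (hlevel : ∀ t, t ^ 4 * #{x ∈ s | t ≤ r x} * a ≤ K * W) :
    a * ∑ x ∈ s, r x ^ 4 ≤ (1 + 16 * K) * W * (Nat.log 2 a + 1) := by
  let scale (x : ι) : ℕ := Nat.log 8 (a * r x ^ 3 * M / W)
  have hscale (x) (hx : x ∈ {x ∈ s | ¬a * r x ^ 3 * M < W}) :
      scale x ∈ range (Nat.log 2 a + 1) := by
    rw [mem_range, Nat.lt_succ_iff]
    refine (Nat.log_mono_right (Nat.div_le_of_le_mul ?_)).trans
      (Nat.log_anti_left one_lt_two (by decide))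
    calc a * r x ^ 3 * M = r x ^ 3 * M * a := by ring
      _ ≤ W * a := Nat.mul_le_mul_right a (hcube x (mem_filter.1 hx).1)
  have hlow : a * ∑ x ∈ s with a * r x ^ 3 * M < W, r x ^ 4 ≤ W :=
    mul_sum_pow_four_le_of_mul_pow_three_le hM
      ((sum_le_sum_of_subset (filter_subset _ _)).trans hsum) fun x hx => (mem_filter.1 hx).2.le
  have hhigh (j) : a * ∑ x ∈ {x ∈ s | ¬a * r x ^ 3 * M < W} with scale x = j, r x ^ 4 ≤
      16 * (K * W) := by
    refine mul_sum_pow_four_le_of_lt_two_mul (fun x hx y hy => ?_) fun t => le_trans ?_ (hlevel t)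
    · simp only [mem_filter] at hx hy
      exact lt_two_mul_of_log_eq hW (not_lt.1 hy.1.2) (hx.2.trans hy.2.symm)
    · gcongr
      exact (filter_subset _ _).trans (filter_subset _ _)
  rw [← sum_filter_add_sum_filter_not s fun x => a * r x ^ 3 * M < W,
    ← sum_fiberwise_of_maps_to hscale, mul_add, mul_sum (range _)]
  calc _ ≤ W + (Nat.log 2 a + 1) • (16 * (K * W)) := by
        refine add_le_add hlow ((sum_le_card_nsmul _ _ _ fun j _ => hhigh j).trans_eq ?_)
        rw [card_range]
    _ ≤ W * (Nat.log 2 a + 1) + (Nat.log 2 a + 1) • (16 * (K * W)) :=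
        Nat.add_le_add_right (Nat.le_mul_of_pos_right W (Nat.succ_pos _)) _
    _ = (1 + 16 * K) * W * (Nat.log 2 a + 1) := by rw [smul_eq_mul]; ring

end LevelSets

section DifferenceEnergy

lemma mul_le_sq_of_pow_five_le {a v w V d t U p : ℕ} (hv : 0 < v) (hV : v ≤ V)
    (htd : t * d ≤ v * w) (ht : U ^ 3 * V ^ 2 ≤ t ^ 3 * (v * w) * a) (ha : a ^ 5 ≤ p ^ 3)
    (hv5 : v ^ 5 ≤ p ^ 3) (hw5 : w ^ 5 ≤ p ^ 3) : U * (a * d) ≤ p ^ 2 := by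
  have hcube : (U * (a * d)) ^ 3 ≤ a ^ 4 * v ^ 2 * w ^ 4 := by
    refine Nat.le_of_mul_le_mul_right (c := v ^ 2) ?_ (pow_pos hv 2)
    calc (U * (a * d)) ^ 3 * v ^ 2 ≤ (U * (a * d)) ^ 3 * V ^ 2 := by gcongr
      _ = a ^ 3 * d ^ 3 * (U ^ 3 * V ^ 2) := by ring
      _ ≤ a ^ 3 * d ^ 3 * (t ^ 3 * (v * w) * a) := by gcongr
      _ = a ^ 4 * (v * w) * (t * d) ^ 3 := by ring
      _ ≤ a ^ 4 * (v * w) * (v * w) ^ 3 := by gcongr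
      _ = a ^ 4 * v ^ 2 * w ^ 4 * v ^ 2 := by ring
  refine le_of_pow_le_pow_left₀ (n := 15) (by decide) (Nat.zero_le _) ?_
  calc (U * (a * d)) ^ 15 = ((U * (a * d)) ^ 3) ^ 5 := by ring
    _ ≤ (a ^ 4 * v ^ 2 * w ^ 4) ^ 5 := Nat.pow_le_pow_left hcube 5
    _ = (a ^ 5) ^ 4 * (v ^ 5) ^ 2 * (w ^ 5) ^ 4 := by ring
    _ ≤ (p ^ 3) ^ 4 * (p ^ 3) ^ 2 * (p ^ 3) ^ 4 := by gcongr
    _ = (p ^ 2) ^ 15 := by ring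

/-- Either the trivial bound `t * d ≤ v * w` suffices, or there are few enough lines for the bound
over a field of characteristic `p` to be available. -/
lemma pow_four_mul_mul_le {a v w V d t U p K : ℕ} (hK : 0 < K) (hv : 0 < v) (hV : v ≤ V)
    (htd : t * d ≤ v * w) (ha : p ≠ 0 → a ^ 5 ≤ p ^ 3) (hv5 : p ≠ 0 → v ^ 5 ≤ p ^ 3)
    (hw5 : p ≠ 0 → w ^ 5 ≤ p ^ 3)
    (h : (p ≠ 0 → U * (a * d) ≤ p ^ 2) → t ^ 4 * (a * d) ≤ K * (U ^ 3 * V ^ 2)) :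
    t ^ 4 * d * a ≤ K * (U ^ 3 * V ^ 2) := by
  rcases le_total (t ^ 3 * (v * w) * a) (U ^ 3 * V ^ 2) with ht | ht
  · calc t ^ 4 * d * a = t ^ 3 * (t * d) * a := by ring
      _ ≤ t ^ 3 * (v * w) * a := by gcongr
      _ ≤ K * (U ^ 3 * V ^ 2) := ht.trans (Nat.le_mul_of_pos_left _ hK)
  · calc t ^ 4 * d * a = t ^ 4 * (a * d) := by ring
      _ ≤ K * (U ^ 3 * V ^ 2) := h fun hp =>
        mul_le_sq_of_pow_five_le hv hV htd ht (ha hp) (hv5 hp) (hw5 hp)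

lemma card_le_card_of_forall_mul_add_mem {F : Type*} [Field F] {g h : F → F} {A B Y : Finset F}
    (hA : A.Nonempty) (hg : ∀ a ∈ A, g a ≠ 0) (hY : ∀ a ∈ A, ∀ b ∈ B, g a * (h a + b) ∈ Y) :
    #B ≤ #Y := by
  obtain ⟨a, ha⟩ := hA
  exact card_le_card_of_injOn (fun b => g a * (h a + b)) (hY a ha) fun b _ b' _ hb =>
    add_left_cancel (mul_left_cancel₀ (hg a ha) hb)

variable {F : Type*} [DecidableEq F]

lemma sum_addConvolution_neg_le [AddGroup F] (B C s : Finset F) :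
    ∑ x ∈ s, B.addConvolution (-C) x ≤ #B * #C := by
  simp only [← card_sub_eq]
  rw [sum_card_fiberwise_eq_card_filter, ← card_product]
  exact card_filter_le _ _

lemma mul_card_le_of_le_addConvolution_neg [AddGroup F] {B C D : Finset F} {t : ℕ}
    (hD : ∀ x ∈ D, t ≤ B.addConvolution (-C) x) : t * #D ≤ #B * #C := by
  rw [mul_comm, ← smul_eq_mul]
  exact (card_nsmul_le_sum _ _ t hD).trans (sum_addConvolution_neg_le B C D)

lemma addConvolution_neg_le_card_right [AddGroup F] (B C : Finset F) (x : F) :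
    B.addConvolution (-C) x ≤ #C :=
  addConvolution_le_card_right.trans_eq (card_neg C)

lemma addConvolution_neg_pow_three_mul_le [AddGroup F] (B C : Finset F) (x : F) :
    B.addConvolution (-C) x ^ 3 * (#B * #C) ≤ #B ^ 3 * #C ^ 2 ∧
      B.addConvolution (-C) x ^ 3 * (#B * #C) ≤ #C ^ 3 * #B ^ 2 := by
  have hB : B.addConvolution (-C) x ≤ #B := addConvolution_le_card_left
  have hC := addConvolution_neg_le_card_right B C x
  generalize B.addConvolution (-C) x = r at hB hC
  constructor
  · calc r ^ 3 * (#B * #C) = r ^ 2 * r * (#B * #C) := by ring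
      _ ≤ #B ^ 2 * #C * (#B * #C) := by gcongr
      _ = #B ^ 3 * #C ^ 2 := by ring
  · calc r ^ 3 * (#B * #C) = r ^ 2 * r * (#B * #C) := by ring
      _ ≤ #C ^ 2 * #B * (#B * #C) := by gcongr
      _ = #C ^ 3 * #B ^ 2 := by ring

variable [Field F] {g h : F → F} {A B C D Y : Finset F} {t : ℕ}

/-- The lines `z ↦ g a * (h a + x + z)` with `a ∈ A` and `x ∈ D`. If `x = b - c`, such a line maps
`c` to the value `g a * (h a + b)`. -/
def translateLines (g h : F → F) (A D : Finset F) : Finset (F × F) :=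
  (A ×ˢ D).image fun u => (g u.1, g u.1 * (h u.1 + u.2))

lemma card_translateLines (hg : ∀ a ∈ A, g a ≠ 0) (hinj : Set.InjOn g A) (D : Finset F) :
    #(translateLines g h A D) = #A * #D := by
  rw [translateLines, card_image_of_injOn, card_product]
  rintro ⟨a, x⟩ hu ⟨a', x'⟩ hu' hux
  rw [mem_coe, mem_product] at hu hu'
  obtain ⟨hga, hx⟩ := Prod.mk.inj hux
  obtain rfl : a = a' := hinj hu.1 hu'.1 hga
  obtain rfl : x = x' := add_left_cancel (mul_left_cancel₀ (hg a hu.1) hx)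
  rfl

lemma card_slope_translateLines_le (g h : F → F) (A D : Finset F) :
    #((translateLines g h A D).image Prod.fst) ≤ #A := by
  rw [translateLines, image_image]
  refine (card_le_card ?_).trans (card_image_le (s := A) (f := g))
  exact image_subset_iff.2 fun u hu => mem_image_of_mem g (mem_product.1 hu).1

lemma le_card_filter_of_mem_translateLines (hY : ∀ a ∈ A, ∀ b ∈ B, g a * (h a + b) ∈ Y)
    (hD : ∀ x ∈ D, t ≤ B.addConvolution (-C) x) :
    ∀ l ∈ translateLines g h A D, t ≤ #{c ∈ C | l.1 * c + l.2 ∈ Y} := by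
  rw [translateLines, forall_mem_image]
  rintro ⟨a, x⟩ hu
  rw [mem_product] at hu
  refine (hD x hu.2).trans ?_
  rw [← card_inter_vadd]
  refine card_le_card_of_injOn (-x + ·) (fun b hb => ?_) (add_right_injective _).injOn
  rw [mem_coe, mem_inter, ← neg_vadd_mem_iff, vadd_eq_add] at hb
  refine mem_coe.2 (mem_filter.2 ⟨hb.2, ?_⟩)
  convert hY a hu.1 b hb.1 using 1
  ring

/-- The first bound takes `C` as the points and `Y` as the values of the lines, the second one the
reverse. -/
lemma pow_four_mul_card_mul_card_le (p : ℕ) [CharP F p] (hg : ∀ a ∈ A, g a ≠ 0)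
    (hinj : Set.InjOn g A) (hAB : #A ≤ #B) (hBY : #B ≤ #Y)
    (hY : ∀ a ∈ A, ∀ b ∈ B, g a * (h a + b) ∈ Y)
    (hD : ∀ x ∈ D, t ≤ B.addConvolution (-C) x) :
    ((p ≠ 0 → #C * (#A * #D) ≤ p ^ 2) →
      t ^ 4 * (#A * #D) ≤ 32000000 * (#C ^ 3 * #Y ^ 2)) ∧
    ((p ≠ 0 → #Y * (#A * #D) ≤ p ^ 2) →
      t ^ 4 * (#A * #D) ≤ 32000000 * (#Y ^ 3 * #C ^ 2)) := by
  rcases D.eq_empty_or_nonempty with rfl | ⟨x, hx⟩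
  · simp
  have htC : t ≤ #C := (hD x hx).trans (addConvolution_neg_le_card_right B C x)
  have htY : t ≤ #Y := ((hD x hx).trans addConvolution_le_card_left).trans hBY
  have hrich := le_card_filter_of_mem_translateLines (h := h) hY hD
  have hslope : #((translateLines g h A D).image Prod.fst) ≤ max #C #Y :=
    (card_slope_translateLines_le g h A D).trans ((hAB.trans hBY).trans (le_max_right _ _))
  have hne : ∀ l ∈ translateLines g h A D, l.1 ≠ 0 :=
    forall_mem_image.2 fun u hu => hg u.1 (mem_product.1 hu).1
  rw [← card_translateLines (h := h) hg hinj D]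
  exact ⟨pow_four_mul_card_rich_le p hrich htC htY hslope,
    pow_four_mul_card_rich_le_of_slope_ne_zero p hrich htC htY hslope hne⟩

lemma pow_four_mul_card_level_le (p : ℕ) [CharP F p] (hA : A.Nonempty) (hC : C.Nonempty)
    (hg : ∀ a ∈ A, g a ≠ 0) (hinj : Set.InjOn g A) (hAB : #A ≤ #B)
    (hY : ∀ a ∈ A, ∀ b ∈ B, g a * (h a + b) ∈ Y) (hB5 : p ≠ 0 → #B ^ 5 ≤ p ^ 3)
    (hC5 : p ≠ 0 → #C ^ 5 ≤ p ^ 3) (s : Finset F) (t : ℕ) :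
    t ^ 4 * #{x ∈ s | t ≤ B.addConvolution (-C) x} * #A ≤ 32000000 * (#Y ^ 3 * #C ^ 2) ∧
      t ^ 4 * #{x ∈ s | t ≤ B.addConvolution (-C) x} * #A ≤ 32000000 * (#C ^ 3 * #Y ^ 2) := by
  have hD : ∀ x ∈ {x ∈ s | t ≤ B.addConvolution (-C) x}, t ≤ B.addConvolution (-C) x :=
    fun x hx => (mem_filter.1 hx).2
  have hBY := card_le_card_of_forall_mul_add_mem hA hg hY
  have hA5 (hp : p ≠ 0) : #A ^ 5 ≤ p ^ 3 := (Nat.pow_le_pow_left hAB 5).trans (hB5 hp)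
  have htD := mul_card_le_of_le_addConvolution_neg hD
  have hlines := pow_four_mul_card_mul_card_le p hg hinj hAB hBY hY hD
  exact ⟨pow_four_mul_mul_le (by decide) hC.card_pos le_rfl (htD.trans_eq (mul_comm _ _)) hA5 hC5
      hB5 hlines.2,
    pow_four_mul_mul_le (by decide) (hA.card_pos.trans_le hAB) hBY htD hA5 hB5 hC5 hlines.1⟩

lemma card_mul_sum_addConvolution_pow_four_le (p : ℕ) [CharP F p] (hA : A.Nonempty)
    (hC : C.Nonempty) (hg : ∀ a ∈ A, g a ≠ 0) (hinj : Set.InjOn g A) (hAB : #A ≤ #B)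
    (hY : ∀ a ∈ A, ∀ b ∈ B, g a * (h a + b) ∈ Y) (hB5 : p ≠ 0 → #B ^ 5 ≤ p ^ 3)
    (hC5 : p ≠ 0 → #C ^ 5 ≤ p ^ 3) (s : Finset F) :
    #A * ∑ x ∈ s, B.addConvolution (-C) x ^ 4 ≤
      10 ^ 9 * min (#Y ^ 3 * #C ^ 2) (#Y ^ 2 * #C ^ 3) * (Nat.log 2 #A + 1) := by
  have hBY := card_le_card_of_forall_mul_add_mem hA hg hY
  have hB : 0 < #B := hA.card_pos.trans_le hAB
  have hYpos : 0 < #Y := hB.trans_le hBY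
  have hCpos := hC.card_pos
  have hcube := addConvolution_neg_pow_three_mul_le B C
  have hlevel := pow_four_mul_card_level_le p hA hC hg hinj hAB hY hB5 hC5 s
  rw [mul_comm (#Y ^ 2)]
  refine (mul_sum_pow_four_le (Nat.mul_pos hB hCpos) (by positivity)
    (sum_addConvolution_neg_le B C s) (fun x _ => le_min ?_ ?_) fun t => ?_).trans
    (Nat.mul_le_mul_right _ (Nat.mul_le_mul_right _ (by norm_num : 1 + 16 * 32000000 ≤ 10 ^ 9)))
  · exact (hcube x).1.trans (Nat.mul_le_mul_right _ (Nat.pow_le_pow_left hBY 3))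
  · exact (hcube x).2.trans (Nat.mul_le_mul_left _ (Nat.pow_le_pow_left hBY 2))
  · rw [← Nat.mul_min_mul_left]
    exact le_min (hlevel t).1 (hlevel t).2

end DifferenceEnergy

section EnergyBound

lemma pow_five_le_of_le_rpow {n p : ℕ} (h : (n : ℝ) ≤ (p : ℝ) ^ ((3 : ℝ) / 5)) :
    n ^ 5 ≤ p ^ 3 := by
  have h5 : (n : ℝ) ^ 5 ≤ ((p : ℝ) ^ ((3 : ℝ) / 5)) ^ 5 := pow_le_pow_left₀ n.cast_nonneg h 5
  rw [← Real.rpow_mul_natCast p.cast_nonneg] at h5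
  norm_num at h5
  exact_mod_cast h5

lemma log_two_add_one_le {a : ℕ} (ha : 0 < a) :
    ((Nat.log 2 a + 1 : ℕ) : ℝ) ≤ 2 * Real.log (2 * a) := by
  have hlog := Real.log_le_log (by positivity) <|
    show (2 : ℝ) ^ Nat.log 2 a ≤ a by exact_mod_cast Nat.pow_log_le_self 2 ha.ne'
  rw [Real.log_pow] at hlog
  rw [Real.log_mul two_ne_zero (by positivity)]
  push_cast
  nlinarith [Real.log_two_gt_d9, (Nat.log 2 a).cast_nonneg (α := ℝ)]

lemma exists_subset_injOn_card_le_mul {α β : Type*} [DecidableEq β] {f : α → β} {A : Finset α}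
    {m : ℕ} (hm : ∀ t, #{a ∈ A | f a = t} ≤ m) :
    ∃ A' ⊆ A, Set.InjOn f A' ∧ #A ≤ m * #A' := by
  obtain ⟨A', hA', hinj, himage⟩ := exists_subset_injOn_image_eq_of_surjOn (A : Set α)
    (A.image f) (f := f) (by rw [coe_image]; exact Set.surjOn_image f A)
  refine ⟨A', coe_subset.1 hA', hinj, ?_⟩
  rw [← card_image_of_injOn hinj, himage]
  exact card_le_mul_card_image A m fun t _ => hm t

variable {F : Type*} [Field F] [DecidableEq F] {g h : F → F} {A B C : Finset F} {m : ℕ}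

lemma card_mul_sum_addConvolution_pow_four_le_mul (p : ℕ) [CharP F p] (hA : A.Nonempty)
    (hC : C.Nonempty) (hg : ∀ a ∈ A, g a ≠ 0) (hm : ∀ t, #{a ∈ A | g a = t} ≤ m)
    (hAB : #A ≤ #B) (hB5 : p ≠ 0 → #B ^ 5 ≤ p ^ 3) (hC5 : p ≠ 0 → #C ^ 5 ≤ p ^ 3)
    (s : Finset F) :
    #A * ∑ x ∈ s, B.addConvolution (-C) x ^ 4 ≤
      10 ^ 9 * m * min (#(image₂ (fun x y => g x * (h x + y)) A B) ^ 3 * #C ^ 2)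
        (#(image₂ (fun x y => g x * (h x + y)) A B) ^ 2 * #C ^ 3) * (Nat.log 2 #A + 1) := by
  obtain ⟨A', hA', hinj, hcard⟩ := exists_subset_injOn_card_le_mul hm
  have hA'ne : A'.Nonempty := card_pos.1 (Nat.pos_of_mul_pos_left (hA.card_pos.trans_le hcard))
  have hle := card_le_card hA'
  have henergy := card_mul_sum_addConvolution_pow_four_le p hA'ne hC (fun a ha => hg a (hA' ha))
    hinj (hle.trans hAB) (fun a ha b hb => mem_image₂_of_mem (hA' ha) hb) hB5 hC5 s (h := h)
    (Y := image₂ (fun x y => g x * (h x + y)) A B)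
  generalize #(image₂ (fun x y => g x * (h x + y)) A B) = f at henergy ⊢
  calc #A * ∑ x ∈ s, B.addConvolution (-C) x ^ 4
      ≤ m * #A' * ∑ x ∈ s, B.addConvolution (-C) x ^ 4 := by gcongr
    _ = m * (#A' * ∑ x ∈ s, B.addConvolution (-C) x ^ 4) := mul_assoc _ _ _
    _ ≤ m * (10 ^ 9 * min (f ^ 3 * #C ^ 2) (f ^ 2 * #C ^ 3) * (Nat.log 2 #A' + 1)) := by gcongr
    _ ≤ m * (10 ^ 9 * min (f ^ 3 * #C ^ 2) (f ^ 2 * #C ^ 3) * (Nat.log 2 #A + 1)) := by gcongr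
    _ = 10 ^ 9 * m * min (f ^ 3 * #C ^ 2) (f ^ 2 * #C ^ 3) * (Nat.log 2 #A + 1) := by ring

theorem fourth_difference_energy_bound_general (p : ℕ) [CharP F p] (hA : A.Nonempty)
    (hg : ∀ a ∈ A, g a ≠ 0) (hm : ∀ t, #{a ∈ A | g a = t} ≤ m) (hAB : #A ≤ #B)
    (hBp : p ≠ 0 → (#B : ℝ) ≤ (p : ℝ) ^ ((3 : ℝ) / 5))
    (hCp : p ≠ 0 → (#C : ℝ) ≤ (p : ℝ) ^ ((3 : ℝ) / 5)) (s : Finset F) :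
    ((∑ x ∈ s, B.addConvolution (-C) x ^ 4 : ℕ) : ℝ) ≤
      2 * 10 ^ 9 * m *
        min ((#(image₂ (fun x y => g x * (h x + y)) A B) : ℝ) ^ 3 * (#C : ℝ) ^ 2 / #A)
          ((#(image₂ (fun x y => g x * (h x + y)) A B) : ℝ) ^ 2 * (#C : ℝ) ^ 3 / #A) *
        Real.log (2 * #A) := by
  rcases C.eq_empty_or_nonempty with rfl | hC
  · simp [addConvolution]
  have henergy := card_mul_sum_addConvolution_pow_four_le_mul (h := h) p hA hC hg hm hAB
    (fun hp => pow_five_le_of_le_rpow (hBp hp)) (fun hp => pow_five_le_of_le_rpow (hCp hp)) s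
  generalize #(image₂ (fun x y => g x * (h x + y)) A B) = f at henergy ⊢
  have hApos : (0 : ℝ) < #A := by exact_mod_cast hA.card_pos
  rw [min_div_div_right hApos.le, ← mul_div_assoc, div_mul_eq_mul_div, le_div_iff₀' hApos]
  calc (#A : ℝ) * ((∑ x ∈ s, B.addConvolution (-C) x ^ 4 : ℕ) : ℝ)
      ≤ 10 ^ 9 * m * min ((f : ℝ) ^ 3 * (#C : ℝ) ^ 2) ((f : ℝ) ^ 2 * (#C : ℝ) ^ 3) *
          ((Nat.log 2 #A + 1 : ℕ) : ℝ) := by exact_mod_cast henergy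
    _ ≤ 10 ^ 9 * m * min ((f : ℝ) ^ 3 * (#C : ℝ) ^ 2) ((f : ℝ) ^ 2 * (#C : ℝ) ^ 3) *
          (2 * Real.log (2 * #A)) := by
        gcongr
        exact log_two_add_one_le hA.card_pos
    _ = 2 * 10 ^ 9 * m * min ((f : ℝ) ^ 3 * (#C : ℝ) ^ 2) ((f : ℝ) ^ 2 * (#C : ℝ) ^ 3) *
          Real.log (2 * #A) := by ring

end EnergyBound

lemma rSub_eq_addConvolution_neg {p : ℕ} (B C : Finset (ZMod p)) (x : ZMod p) :
    rSub B C x = B.addConvolution (-C) x :=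
  card_sub_eq B C x

lemma card_filter_eq_le_mu {p : ℕ} [NeZero p] {g : ZMod p → ZMod p}
    (hg : ∀ x, x ≠ 0 → g x ≠ 0) {A : Finset (ZMod p)} (hA : 0 ∉ A) (t : ZMod p) :
    #{a ∈ A | g a = t} ≤ mu g := by
  have hne : ∀ a ∈ A, a ≠ 0 := fun a ha => ne_of_mem_of_not_mem ha hA
  rcases {a ∈ A | g a = t}.eq_empty_or_nonempty with hempty | ⟨a, ha⟩
  · rw [hempty, card_empty]
    exact Nat.zero_le _
  rw [mem_filter] at ha
  have ht : t ∈ ({t | t ≠ 0} : Finset (ZMod p)) :=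
    mem_filter.2 ⟨mem_univ t, ha.2 ▸ hg a (hne a ha.1)⟩
  refine le_trans (card_le_card fun b hb => ?_)
    (le_sup (f := fun t => #{x : ZMod p | x ≠ 0 ∧ g x = t}) ht)
  rw [mem_filter] at hb
  exact mem_filter.2 ⟨mem_univ b, hne b hb.1, hb.2⟩

theorem fourth_difference_energy_bound :
    ∃ C > (0:ℝ),
      ∀ (p : ℕ) [Fact p.Prime], p ≠ 2 →
      ∀ g h : ZMod p → ZMod p,
      (∀ x : ZMod p, x ≠ 0 → g x ≠ 0) → (∀ x : ZMod p, x ≠ 0 → h x ≠ 0) →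
      ∀ A B Cs : Finset (ZMod p),
      A.Nonempty → B.Nonempty → Cs.Nonempty →
      (0:ZMod p) ∉ A → (0:ZMod p) ∉ B → (0:ZMod p) ∉ Cs →
      A.card ≤ B.card →
      (A.card : ℝ) ≤ (p:ℝ) ^ ((3:ℝ)/5) →
      (B.card : ℝ) ≤ (p:ℝ) ^ ((3:ℝ)/5) →
      (Cs.card : ℝ) ≤ (p:ℝ) ^ ((3:ℝ)/5) →
      (E4 B Cs : ℝ) ≤
        C * ((mu g : ℕ) : ℝ) ^ 4 *
          min (((Finset.image₂ (fun x y => g x * (h x + y)) A B).card : ℝ) ^ 3 * (Cs.card : ℝ) ^ 2 / (A.card : ℝ))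
              (((Finset.image₂ (fun x y => g x * (h x + y)) A B).card : ℝ) ^ 2 * (Cs.card : ℝ) ^ 3 / (A.card : ℝ)) *
          Real.log (2 * (A.card : ℝ)) := by
  refine ⟨2 * 10 ^ 9, by norm_num, ?_⟩
  intro p _ _ g h hg _ A B Cs hA _ _ hA0 _ _ hAB _ hB hC
  have hbound := fourth_difference_energy_bound_general (h := h) p hA
    (fun a ha => hg a (ne_of_mem_of_not_mem ha hA0)) (card_filter_eq_le_mu hg hA0) hAB
    (fun _ => hB) (fun _ => hC) univ
  have hlog : 0 ≤ Real.log (2 * (#A : ℝ)) := Real.log_nonneg <| by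
    have : (1 : ℝ) ≤ #A := by exact_mod_cast hA.card_pos
    linarith
  have hmu : ((mu g : ℕ) : ℝ) ≤ ((mu g : ℕ) : ℝ) ^ 4 := by
    exact_mod_cast Nat.le_self_pow four_ne_zero (mu g)
  simp only [E4, rSub_eq_addConvolution_neg]
  exact hbound.trans (by gcongr)
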